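/- (Theorem 25) Let 0 < θ₀ < θ₁ < 1, 0 < θ < 1, 0 < r, r₀, r₁, q₀, q₁ ≤ ∞, a, a₀, a₁, b₀, b₁ ∈ SV, ‖s^{-1/r₀} b₀(s)/a₀(s)‖_{r₀,(1,∞)} < ∞, and ‖s^{-1/r₁} b₁(s)/a₁(s)‖_{r₁,(1,∞)} < ∞. Put c₀(t) = a₀(t) ‖s^{-1/r₀} b₀(s)/a₀(s)‖_{r₀,(t,∞)}, c₁(t) = a₁(t) ‖s^{-1/r₁} b₁(s)/a₁(s)‖_{r₁,(t,∞)}, and ρ(t) = t^{θ₁-θ₀} c₀(t)/c₁(t). Then (Ā^𝓛_{θ₀,r₀,b₀,q₀,a₀}, Ā^𝓛_{θ₁,r₁,b₁,q₁,a₁})_{θ,r;a} ≅ Ā_{η,r;a^#}, where η = (1-θ)θ₀ + θθ₁ and a^#(t) = c₀(t)^{1-θ} c₁(t)^θ a(ρ(t)). -/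

import Mathlib

open MeasureTheory Set ENNReal Filter

noncomputable section

/-- The `L_q` quasi-norm (with respect to Lebesgue measure) of an `ℝ≥0∞`-valued
function over a set of reals; for `q = ∞` it is the essential supremum. -/
def LqNorm (q : ℝ≥0∞) (s : Set ℝ) (g : ℝ → ℝ≥0∞) : ℝ≥0∞ :=
  if q = ∞ then essSup g (volume.restrict s)
  else (∫⁻ t in s, g t ^ q.toReal) ^ q⁻¹.toReal

/-- The weight `s ↦ s ^ (-1/r) * b s`, as an `ℝ≥0∞`-valued function
(`1/∞ = 0` by convention). -/
def svWgt (r : ℝ≥0∞) (b : ℝ → ℝ) : ℝ → ℝ≥0∞ :=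
  fun s => ENNReal.ofReal (s ^ (-(r⁻¹.toReal)) * b s)

/-- `f` and `g` are equivalent on `s`: each is bounded by a constant multiple
of the other there. -/
def EquivOn (s : Set ℝ) (f g : ℝ → ℝ) : Prop :=
  ∃ C : ℝ, 0 < C ∧ ∀ t ∈ s, C⁻¹ * g t ≤ f t ∧ f t ≤ C * g t

/-- A positive measurable function `b` on `(0,∞)` is slowly varying if for every
`ε > 0`, `t ^ ε * b t` is equivalent to a non-decreasing function and
`t ^ (-ε) * b t` is equivalent to a non-increasing function. -/
def SlowlyVarying (b : ℝ → ℝ) : Prop :=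
  AEMeasurable b (volume.restrict (Ioi 0)) ∧ (∀ t ∈ Ioi (0:ℝ), 0 < b t) ∧
    ∀ ε : ℝ, 0 < ε →
      (∃ g : ℝ → ℝ, MonotoneOn g (Ioi 0) ∧ EquivOn (Ioi 0) (fun t => t ^ ε * b t) g) ∧
      (∃ g : ℝ → ℝ, AntitoneOn g (Ioi 0) ∧ EquivOn (Ioi 0) (fun t => t ^ (-ε) * b t) g)

/-- A quasi-Banach space continuously embedded into the ambient (Hausdorff) space `E`,
recorded via its extended-real-valued quasi-norm; the space itself is the set of
vectors of finite quasi-norm. -/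
structure QuasiBanach (E : Type*) [AddCommGroup E] [Module ℝ E] where
  N : E → ℝ≥0∞
  zero : N 0 = 0
  definite : ∀ x, N x = 0 → x = 0
  smul : ∀ (c : ℝ) (x : E), N (c • x) = ENNReal.ofReal |c| * N x
  quasi : ∃ C : ℝ≥0∞, 1 ≤ C ∧ C ≠ ∞ ∧ ∀ x y, N (x + y) ≤ C * (N x + N y)
  complete : ∀ f : ℕ → E,
    (∀ ε : ℝ≥0∞, 0 < ε → ∃ M : ℕ, ∀ m ≥ M, ∀ n ≥ M, N (f m - f n) < ε) →
    (∀ n, N (f n) ≠ ∞) →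
    ∃ g : E, N g ≠ ∞ ∧ Tendsto (fun n => N (f n - g)) atTop (nhds 0)

variable {E : Type*} [AddCommGroup E] [Module ℝ E]

/-- The Peetre K-functional of the couple whose quasi-norms are `N₀`, `N₁`. -/
def Kf (N₀ N₁ : E → ℝ≥0∞) (t : ℝ) (f : E) : ℝ≥0∞ :=
  ⨅ g : E, N₀ g + ENNReal.ofReal t * N₁ (f - g)

/-- The quasi-norm of the real interpolation space `Ā_{θ,q;b}`. -/
def normK (N₀ N₁ : E → ℝ≥0∞) (θ : ℝ) (q : ℝ≥0∞) (b : ℝ → ℝ) (f : E) : ℝ≥0∞ :=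
  LqNorm q (Ioi 0) fun u =>
    ENNReal.ofReal (u ^ (-θ - q⁻¹.toReal) * b u) * Kf N₀ N₁ u f

/-- The quasi-norm of the limiting interpolation space `Ā^𝓛_{σ,r,b,q,a}`. -/
def normL (N₀ N₁ : E → ℝ≥0∞) (σ : ℝ) (r q : ℝ≥0∞) (b a : ℝ → ℝ) (f : E) : ℝ≥0∞ :=
  LqNorm r (Ioi 0) fun t =>
    ENNReal.ofReal (t ^ (-(r⁻¹.toReal)) * (b t / a t)) *
      LqNorm q (Ioo 0 t) fun u =>
        ENNReal.ofReal (u ^ (-σ - q⁻¹.toReal) * a u) * Kf N₀ N₁ u f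

/-- The quasi-norm of the limiting interpolation space `Ā^𝓡_{σ,r,b,q,a}`. -/
def normR (N₀ N₁ : E → ℝ≥0∞) (σ : ℝ) (r q : ℝ≥0∞) (b a : ℝ → ℝ) (f : E) : ℝ≥0∞ :=
  LqNorm r (Ioi 0) fun t =>
    ENNReal.ofReal (t ^ (-(r⁻¹.toReal)) * (b t / a t)) *
      LqNorm q (Ioi t) fun u =>
        ENNReal.ofReal (u ^ (-σ - q⁻¹.toReal) * a u) * Kf N₀ N₁ u f

/-- Two (extended-real-valued) quasi-norms define the same space with
equivalent quasi-norms. -/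
def EquivNorms (nX nY : E → ℝ≥0∞) : Prop :=
  ∃ C : ℝ≥0∞, 0 < C ∧ C ≠ ∞ ∧ ∀ f : E, C⁻¹ * nY f ≤ nX f ∧ nX f ≤ C * nY f

/-- `L_q` quasi-norm with respect to a general measure. -/
def Lm {α : Type*} [MeasurableSpace α] (q : ℝ≥0∞) (μ : Measure α) (g : α → ℝ≥0∞) : ℝ≥0∞ :=
  if q = ∞ then essSup g μ
  else (∫⁻ t, g t ^ q.toReal ∂μ) ^ q⁻¹.toReal

theorem LqNorm_eq (q : ℝ≥0∞) (s : Set ℝ) (g : ℝ → ℝ≥0∞) :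
    LqNorm q s g = Lm q (volume.restrict s) g := rfl

section LmLemmas
variable {α : Type*} [MeasurableSpace α] {μ : Measure α}

theorem Lm_mono {q : ℝ≥0∞} {f g : α → ℝ≥0∞} (h : f ≤ᵐ[μ] g) : Lm q μ f ≤ Lm q μ g := by
  unfold Lm
  split_ifs
  · exact essSup_mono_ae h
  · refine ENNReal.rpow_le_rpow (lintegral_mono_ae ?_) ENNReal.toReal_nonneg
    filter_upwards [h] with x hx
    exact ENNReal.rpow_le_rpow hx ENNReal.toReal_nonneg

theorem Lm_const_mul_of_ne_top {q : ℝ≥0∞} (hq : 0 < q) {g : α → ℝ≥0∞} {C : ℝ≥0∞} (hC : C ≠ ∞) :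
    Lm q μ (fun x => C * g x) = C * Lm q μ g := by
  unfold Lm
  split_ifs with h
  · exact ENNReal.essSup_const_mul
  · have hq' : 0 < q.toReal := ENNReal.toReal_pos hq.ne' h
    simp_rw [ENNReal.mul_rpow_of_nonneg _ _ hq'.le]
    rw [lintegral_const_mul' _ _ (ENNReal.rpow_ne_top_of_nonneg hq'.le hC),
      ENNReal.mul_rpow_of_nonneg _ _ ENNReal.toReal_nonneg, ← ENNReal.rpow_mul,
      ENNReal.toReal_inv, mul_inv_cancel₀ hq'.ne', ENNReal.rpow_one]

theorem Lm_const_mul {q : ℝ≥0∞} (hq : 0 < q) {g : α → ℝ≥0∞} (hg : AEMeasurable g μ) (C : ℝ≥0∞) :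
    Lm q μ (fun x => C * g x) = C * Lm q μ g := by
  unfold Lm
  split_ifs with h
  · exact ENNReal.essSup_const_mul
  · have hq' : 0 < q.toReal := ENNReal.toReal_pos hq.ne' h
    simp_rw [ENNReal.mul_rpow_of_nonneg _ _ hq'.le]
    rw [lintegral_const_mul'' _ (hg.pow_const _),
      ENNReal.mul_rpow_of_nonneg _ _ ENNReal.toReal_nonneg, ← ENNReal.rpow_mul,
      ENNReal.toReal_inv, mul_inv_cancel₀ hq'.ne', ENNReal.rpow_one]

theorem essSup_rpow {p : ℝ} (hp : 0 < p) (g : α → ℝ≥0∞) :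
    essSup (fun x => g x ^ p) μ = (essSup g μ) ^ p := by
  have := (ENNReal.orderIsoRpow p hp).essSup_apply g μ
  simpa using this.symm

theorem Lm_rpow {p : ℝ} (hp : 0 < p) {r : ℝ≥0∞} (hr : 0 < r) (g : α → ℝ≥0∞) :
    Lm (r / ENNReal.ofReal p) μ (fun x => g x ^ p) = (Lm r μ g) ^ p := by
  have hp' : ENNReal.ofReal p ≠ 0 := by simpa using hp
  by_cases h : r = ∞
  · subst h
    have : (∞ : ℝ≥0∞) / ENNReal.ofReal p = ∞ := ENNReal.top_div_of_ne_top ENNReal.ofReal_ne_top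
    simp only [Lm, this, if_true]
    exact essSup_rpow hp g
  · have h2 : r / ENNReal.ofReal p ≠ ∞ := ENNReal.div_ne_top h hp'
    have hr' : 0 < r.toReal := ENNReal.toReal_pos hr.ne' h
    simp only [Lm, h2, h, if_false]
    have e : (r / ENNReal.ofReal p).toReal = r.toReal / p := by
      rw [ENNReal.toReal_div, ENNReal.toReal_ofReal hp.le]
    rw [ENNReal.toReal_inv, e, ← ENNReal.rpow_mul, ENNReal.toReal_inv]
    congr 1
    · refine lintegral_congr fun x => ?_
      rw [← ENNReal.rpow_mul]
      congr 1
      field_simp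
    · field_simp

theorem Lm_add_le {q : ℝ≥0∞} (hq : 1 ≤ q) {f g : α → ℝ≥0∞} (hf : AEMeasurable f μ)
    (hg : AEMeasurable g μ) :
    Lm q μ (fun x => f x + g x) ≤ Lm q μ f + Lm q μ g := by
  unfold Lm
  split_ifs with h
  · exact ENNReal.essSup_add_le f g
  · have hq' : 1 ≤ q.toReal := by
      have := ENNReal.toReal_mono h hq
      simpa using this
    have := ENNReal.lintegral_Lp_add_le hf hg hq'
    rw [ENNReal.toReal_inv]
    simpa [one_div] using this

theorem Lm_sum_le {ι : Type*} {q : ℝ≥0∞} (hq : 1 ≤ q) {F : ι → α → ℝ≥0∞}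
    (hF : ∀ i, AEMeasurable (F i) μ) (s : Finset ι) :
    Lm q μ (fun x => ∑ i ∈ s, F i x) ≤ ∑ i ∈ s, Lm q μ (F i) := by
  classical
  induction s using Finset.induction_on with
  | empty =>
    simp only [Finset.sum_empty, nonpos_iff_eq_zero]
    have := Lm_const_mul_of_ne_top (μ := μ) (lt_of_lt_of_le one_pos hq) (g := fun _ => 0)
      (C := 0) (by simp)
    simpa using this
  | insert i s hi ih =>
    simp_rw [Finset.sum_insert hi]
    refine (Lm_add_le hq (hF i) (Finset.aemeasurable_fun_sum s fun j _ => hF j)).trans ?_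
    gcongr

theorem Lm_tsum_le {ι : Type*} [Countable ι] {q : ℝ≥0∞} (hq : 1 ≤ q) {F : ι → α → ℝ≥0∞}
    (hF : ∀ i, AEMeasurable (F i) μ) :
    Lm q μ (fun x => ∑' i, F i x) ≤ ∑' i, Lm q μ (F i) := by
  classical
  have key : Lm q μ (fun x => ∑' i, F i x) ≤ ⨆ s : Finset ι, Lm q μ (fun x => ∑ i ∈ s, F i x) := by
    simp_rw [ENNReal.tsum_eq_iSup_sum]
    by_cases h : q = ∞
    · simp only [Lm, h, if_true]
      refine essSup_le_of_ae_le _ ?_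
      have : ∀ s : Finset ι, ∀ᵐ x ∂μ, ∑ i ∈ s, F i x ≤ essSup (fun x => ∑ i ∈ s, F i x) μ :=
        fun s => ENNReal.ae_le_essSup _
      filter_upwards [ae_all_iff.2 this] with x hx
      exact iSup_mono fun s => hx s
    · simp only [Lm, h, if_false]
      have hq0 : 0 < q := lt_of_lt_of_le one_pos hq
      have hq' : 0 < q.toReal := ENNReal.toReal_pos hq0.ne' h
      have hq'' : 0 < q⁻¹.toReal := by rw [ENNReal.toReal_inv]; positivity
      have e1 : ∀ x, (⨆ s : Finset ι, ∑ i ∈ s, F i x) ^ q.toReal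
          = ⨆ s : Finset ι, (∑ i ∈ s, F i x) ^ q.toReal := fun x => by
        have := (ENNReal.orderIsoRpow _ hq').map_iSup (fun s : Finset ι => ∑ i ∈ s, F i x)
        simp only [ENNReal.orderIsoRpow_apply] at this
        exact this
      simp_rw [e1]
      rw [lintegral_iSup_directed]
      · have := (ENNReal.orderIsoRpow _ hq'').map_iSup
          (fun s : Finset ι => ∫⁻ x, (∑ i ∈ s, F i x) ^ q.toReal ∂μ)
        simp only [ENNReal.orderIsoRpow_apply] at this
        exact this.le
      · intro s
        exact (Finset.aemeasurable_fun_sum s fun j _ => hF j).pow_const _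
      · refine Monotone.directed_le fun s t hst x => ?_
        exact ENNReal.rpow_le_rpow (Finset.sum_le_sum_of_subset hst) hq'.le
  refine key.trans (iSup_le fun s => (Lm_sum_le hq hF s).trans (ENNReal.sum_le_tsum s))

end LmLemmas

/-- The `ℓ_r` quasi-norm on `ℤ`. -/
def ell (r : ℝ≥0∞) (y : ℤ → ℝ≥0∞) : ℝ≥0∞ := Lm r Measure.count y

theorem ell_top (y : ℤ → ℝ≥0∞) : ell ∞ y = ⨆ k, y k := by
  simp [ell, Lm]

theorem ell_of_ne_top {r : ℝ≥0∞} (h : r ≠ ∞) (y : ℤ → ℝ≥0∞) :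
    ell r y = (∑' k, y k ^ r.toReal) ^ r⁻¹.toReal := by
  simp [ell, Lm, h, lintegral_count]

theorem ell_shift (r : ℝ≥0∞) (y : ℤ → ℝ≥0∞) (i : ℤ) : ell r (fun k => y (k + i)) = ell r y := by
  by_cases h : r = ∞
  · subst h
    rw [ell_top, ell_top]
    exact (Equiv.addRight i).iSup_congr (fun k => rfl)
  · rw [ell_of_ne_top h, ell_of_ne_top h]
    congr 1
    exact (Equiv.addRight i).tsum_eq (fun k => y k ^ r.toReal)

theorem ell_mono {r : ℝ≥0∞} {x y : ℤ → ℝ≥0∞} (h : ∀ k, x k ≤ y k) : ell r x ≤ ell r y :=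
  Lm_mono (Eventually.of_forall h)

theorem ell_le_mul {r : ℝ≥0∞} (hr : 0 < r) {x y : ℤ → ℝ≥0∞} {C : ℝ≥0∞} (hC : C ≠ ∞)
    (h : ∀ k, x k ≤ C * y k) : ell r x ≤ C * ell r y := by
  rw [ell, ell, ← Lm_const_mul_of_ne_top hr hC]
  exact ell_mono h

theorem tsum_rpow_le_rpow_tsum {ι : Type*} {s : ℝ} (hs : 1 ≤ s) (y : ι → ℝ≥0∞) :
    ∑' k, y k ^ s ≤ (∑' k, y k) ^ s := by
  classical
  rw [ENNReal.tsum_eq_iSup_sum]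
  refine iSup_le fun t => ?_
  refine le_trans ?_ (ENNReal.rpow_le_rpow (ENNReal.sum_le_tsum t) (by linarith))
  induction t using Finset.induction_on with
  | empty => simp
  | insert i t hi ih =>
    rw [Finset.sum_insert hi, Finset.sum_insert hi]
    exact (add_le_add_right ih _).trans (ENNReal.add_rpow_le_rpow_add _ _ hs)

/-- `ℓ_p ⊂ ℓ_q` for `p ≤ q`. -/
theorem ell_le_tsum {q : ℝ≥0∞} {p : ℝ} (hp : 0 < p) (hpq : ENNReal.ofReal p ≤ q)
    (y : ℤ → ℝ≥0∞) : ell q y ≤ (∑' k, y k ^ p) ^ p⁻¹ := by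
  by_cases h : q = ∞
  · subst h
    rw [ell_top]
    refine iSup_le fun k => ?_
    have := ENNReal.rpow_le_rpow (ENNReal.le_tsum (f := fun k => y k ^ p) k) (inv_pos.2 hp).le
    rwa [← ENNReal.rpow_mul, mul_inv_cancel₀ hp.ne', ENNReal.rpow_one] at this
  · rw [ell_of_ne_top h]
    have h1 : p ≤ q.toReal := (ENNReal.ofReal_le_iff_le_toReal h).1 hpq
    have hq : 0 < q.toReal := hp.trans_le h1
    have := tsum_rpow_le_rpow_tsum (s := q.toReal / p) ((one_le_div hp).2 h1) (fun k => y k ^ p)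
    simp_rw [← ENNReal.rpow_mul] at this
    rw [mul_div_cancel₀ _ hp.ne'] at this
    refine (ENNReal.rpow_le_rpow this ENNReal.toReal_nonneg).trans ?_
    rw [← ENNReal.rpow_mul, ENNReal.toReal_inv]
    apply le_of_eq
    congr 1
    field_simp

section Discr

theorem ofReal_rpow_inv_rpow {q : ℝ≥0∞} (hq : 0 < q) (hq' : q ≠ ∞) {u : ℝ} (hu : 0 < u) :
    ENNReal.ofReal (u ^ (-(q⁻¹.toReal))) ^ q.toReal = ENNReal.ofReal u⁻¹ := by
  have h : 0 < q.toReal := ENNReal.toReal_pos hq.ne' hq'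
  rw [ENNReal.ofReal_rpow_of_pos (Real.rpow_pos_of_pos hu _), ← Real.rpow_mul hu.le,
    ENNReal.toReal_inv, neg_mul, inv_mul_cancel₀ h.ne', Real.rpow_neg_one]

theorem discr_up {t : ℤ → ℝ} {Λ : ℝ} (ht : ∀ k, 0 < t k)
    (hΛ : ∀ k, t (k + 1) ≤ Λ * t k)
    (hcov : ∀ x, 0 < x → ∃ k, t k ≤ x ∧ x < t (k + 1)) {q : ℝ≥0∞} (hq : 0 < q) :
    ∃ C : ℝ≥0∞, C ≠ ∞ ∧ ∀ (s : Set ℝ) (F : ℝ → ℝ≥0∞) (y : ℤ → ℝ≥0∞), MeasurableSet s →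
      s ⊆ Ioi 0 →
      (∀ k, ∀ u ∈ s, t k ≤ u → u < t (k + 1) →
        F u ≤ ENNReal.ofReal (u ^ (-(q⁻¹.toReal))) * y k) →
      LqNorm q s F ≤ C * ell q y := by
  by_cases h : q = ∞
  · subst h
    refine ⟨1, by simp, fun s F y hs hs0 hF => ?_⟩
    rw [ell_top, one_mul]
    simp only [LqNorm, if_true]
    refine essSup_le_of_ae_le _ ?_
    filter_upwards [ae_restrict_mem hs] with u hu
    obtain ⟨k, hk1, hk2⟩ := hcov u (hs0 hu)
    have := hF k u hu hk1 hk2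
    simp only [ENNReal.inv_top, ENNReal.toReal_zero, neg_zero, Real.rpow_zero, ENNReal.ofReal_one,
      one_mul] at this
    exact this.trans (le_iSup y k)
  · have hq' : 0 < q.toReal := ENNReal.toReal_pos hq.ne' h
    refine ⟨(ENNReal.ofReal Λ) ^ q⁻¹.toReal,
      ENNReal.rpow_ne_top_of_nonneg ENNReal.toReal_nonneg ENNReal.ofReal_ne_top,
      fun s F y hs hs0 hF => ?_⟩
    rw [ell_of_ne_top h, ← ENNReal.mul_rpow_of_nonneg _ _ ENNReal.toReal_nonneg]
    simp only [LqNorm, h, if_false]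
    refine ENNReal.rpow_le_rpow ?_ ENNReal.toReal_nonneg
    have hsub : s ⊆ ⋃ k, s ∩ Ico (t k) (t (k + 1)) := by
      intro u hu
      obtain ⟨k, hk1, hk2⟩ := hcov u (hs0 hu)
      exact mem_iUnion.2 ⟨k, hu, hk1, hk2⟩
    calc ∫⁻ u in s, F u ^ q.toReal
        ≤ ∫⁻ u in ⋃ k, s ∩ Ico (t k) (t (k + 1)), F u ^ q.toReal := lintegral_mono_set hsub
      _ ≤ ∑' k, ∫⁻ u in s ∩ Ico (t k) (t (k + 1)), F u ^ q.toReal := lintegral_iUnion_le _ _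
      _ ≤ ∑' k, ENNReal.ofReal Λ * y k ^ q.toReal := by
          refine ENNReal.tsum_le_tsum fun k => ?_
          calc ∫⁻ u in s ∩ Ico (t k) (t (k + 1)), F u ^ q.toReal
              ≤ ∫⁻ u in s ∩ Ico (t k) (t (k + 1)),
                  ENNReal.ofReal (t k)⁻¹ * y k ^ q.toReal := by
                refine setLIntegral_mono' (hs.inter measurableSet_Ico) fun u hu => ?_
                have hu0 : 0 < u := (ht k).trans_le hu.2.1
                calc F u ^ q.toReal
                    ≤ (ENNReal.ofReal (u ^ (-(q⁻¹.toReal))) * y k) ^ q.toReal :=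
                      ENNReal.rpow_le_rpow (hF k u hu.1 hu.2.1 hu.2.2) hq'.le
                  _ = ENNReal.ofReal u⁻¹ * y k ^ q.toReal := by
                      rw [ENNReal.mul_rpow_of_nonneg _ _ hq'.le, ofReal_rpow_inv_rpow hq h hu0]
                  _ ≤ _ := by
                      gcongr
                      · exact ht k
                      · exact hu.2.1
            _ ≤ ENNReal.ofReal (t k)⁻¹ * y k ^ q.toReal * volume (Ico (t k) (t (k + 1))) := by
                rw [setLIntegral_const]
                gcongr
                exact inter_subset_right
            _ = (ENNReal.ofReal (t k)⁻¹ * ENNReal.ofReal (t (k + 1) - t k)) * y k ^ q.toReal := by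
                rw [Real.volume_Ico]; ring
            _ ≤ ENNReal.ofReal Λ * y k ^ q.toReal := by
                gcongr
                rw [← ENNReal.ofReal_mul (inv_pos.2 (ht k)).le]
                apply ENNReal.ofReal_le_ofReal
                rw [inv_mul_le_iff₀ (ht k)]
                have := hΛ k
                have := ht k
                linarith
      _ = _ := ENNReal.tsum_mul_left

/-- Lower bound of the integral over one block. -/
theorem block_low {q : ℝ≥0∞} (hq : 0 < q) (h : q ≠ ∞) {x z : ℝ} (hx : 0 < x) (hxz : 2 * x ≤ z)
    {F : ℝ → ℝ≥0∞} {y : ℝ≥0∞}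
    (hF : ∀ u, x ≤ u → u < z → ENNReal.ofReal (u ^ (-(q⁻¹.toReal))) * y ≤ F u) :
    y ^ q.toReal ≤ 2 * ∫⁻ u in Ico x z, F u ^ q.toReal := by
  have hq' : 0 < q.toReal := ENNReal.toReal_pos hq.ne' h
  have hz : 0 < z := by linarith
  have h1 : ENNReal.ofReal z⁻¹ * y ^ q.toReal * volume (Ico x z) ≤
      ∫⁻ u in Ico x z, F u ^ q.toReal := by
    rw [← setLIntegral_const]
    refine setLIntegral_mono' measurableSet_Ico fun u hu => ?_
    have hu0 : 0 < u := hx.trans_le hu.1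
    refine le_trans ?_ (ENNReal.rpow_le_rpow (hF u hu.1 hu.2) hq'.le)
    rw [ENNReal.mul_rpow_of_nonneg _ _ hq'.le, ofReal_rpow_inv_rpow hq h hu0]
    gcongr
    exact hu.2.le
  calc y ^ q.toReal = 1 * y ^ q.toReal := (one_mul _).symm
    _ ≤ (2 * (ENNReal.ofReal z⁻¹ * ENNReal.ofReal (z - x))) * y ^ q.toReal := by
        gcongr
        rw [← ENNReal.ofReal_mul (inv_pos.2 hz).le, ← ENNReal.ofReal_ofNat 2,
          ← ENNReal.ofReal_mul (by norm_num), ← ENNReal.ofReal_one]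
        apply ENNReal.ofReal_le_ofReal
        rw [← mul_assoc, mul_comm 2, mul_assoc, le_inv_mul_iff₀ hz]
        linarith
    _ = 2 * (ENNReal.ofReal z⁻¹ * y ^ q.toReal * volume (Ico x z)) := by
        rw [Real.volume_Ico]; ring
    _ ≤ _ := by gcongr

theorem block_low_top {x z : ℝ} (hxz : x < z) {F : ℝ → ℝ≥0∞} {y : ℝ≥0∞} {s : Set ℝ}
    (hs : Ico x z ⊆ s) (hF : ∀ u, x ≤ u → u < z → y ≤ F u) :
    y ≤ essSup F (volume.restrict s) := by
  by_contra hlt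
  push Not at hlt
  have h1 := ae_lt_of_essSup_lt hlt
  have h2 : ∀ᵐ u ∂volume.restrict (Ico x z), F u < y := ae_restrict_of_ae_restrict_of_subset hs h1
  rw [ae_restrict_iff' measurableSet_Ico] at h2
  have h3 : volume (Ico x z) = 0 := by
    refine measure_mono_null ?_ h2
    intro u hu
    simp only [mem_compl_iff, mem_ofPred_eq, not_forall, not_lt]
    exact ⟨hu, hF u hu.1 hu.2⟩
  rw [Real.volume_Ico, ENNReal.ofReal_eq_zero] at h3
  linarith

/-- Lower bound of the norm over a single block. -/
theorem single_low {q : ℝ≥0∞} (hq : 0 < q) :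
    ∃ C : ℝ≥0∞, C ≠ ∞ ∧ ∀ (s : Set ℝ) (F : ℝ → ℝ≥0∞) (y : ℝ≥0∞) (x z : ℝ), 0 < x → 2 * x ≤ z →
      Ico x z ⊆ s →
      (∀ u, x ≤ u → u < z → ENNReal.ofReal (u ^ (-(q⁻¹.toReal))) * y ≤ F u) →
      y ≤ C * LqNorm q s F := by
  by_cases h : q = ∞
  · subst h
    refine ⟨1, by simp, fun s F y x z hx hxz hs hF => ?_⟩
    simp only [LqNorm, if_true, one_mul]
    refine block_low_top (by linarith : x < z) hs fun u h1 h2 => ?_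
    simpa using hF u h1 h2
  · have hq' : 0 < q.toReal := ENNReal.toReal_pos hq.ne' h
    refine ⟨2 ^ q⁻¹.toReal,
      ENNReal.rpow_ne_top_of_nonneg ENNReal.toReal_nonneg (by simp),
      fun s F y x z hx hxz hs hF => ?_⟩
    simp only [LqNorm, h, if_false]
    rw [← ENNReal.mul_rpow_of_nonneg _ _ ENNReal.toReal_nonneg, ENNReal.toReal_inv,
      ← ENNReal.rpow_le_rpow_iff hq', ← ENNReal.rpow_mul, inv_mul_cancel₀ hq'.ne', ENNReal.rpow_one]
    refine (block_low hq h hx hxz hF).trans ?_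
    gcongr

theorem discr_low {t : ℤ → ℝ} (ht : ∀ k, 0 < t k)
    (h2 : ∀ k, 2 * t k ≤ t (k + 1)) {q : ℝ≥0∞} (hq : 0 < q) :
    ∃ C : ℝ≥0∞, C ≠ ∞ ∧ ∀ (F : ℝ → ℝ≥0∞) (y : ℤ → ℝ≥0∞),
      (∀ k, ∀ u, t k ≤ u → u < t (k + 1) →
        ENNReal.ofReal (u ^ (-(q⁻¹.toReal))) * y k ≤ F u) →
      ell q y ≤ C * LqNorm q (Ioi 0) F := by
  have hsub : ∀ k, Ico (t k) (t (k + 1)) ⊆ Ioi 0 := fun k u hu => (ht k).trans_le hu.1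
  by_cases h : q = ∞
  · subst h
    refine ⟨1, by simp, fun F y hF => ?_⟩
    rw [ell_top]
    simp only [LqNorm, if_true, one_mul]
    refine iSup_le fun k => ?_
    refine block_low_top (by linarith [ht k, h2 k] : t k < t (k + 1)) (hsub k) fun u h1 h2 => ?_
    simpa using hF k u h1 h2
  · have hq' : 0 < q.toReal := ENNReal.toReal_pos hq.ne' h
    refine ⟨2 ^ q⁻¹.toReal,
      ENNReal.rpow_ne_top_of_nonneg ENNReal.toReal_nonneg (by simp),
      fun F y hF => ?_⟩
    rw [ell_of_ne_top h]
    simp only [LqNorm, h, if_false]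
    rw [← ENNReal.mul_rpow_of_nonneg _ _ ENNReal.toReal_nonneg]
    refine ENNReal.rpow_le_rpow ?_ ENNReal.toReal_nonneg
    have hmono : Monotone t := monotone_int_of_le_succ fun k => by linarith [ht k, h2 k]
    have hdisj : Pairwise (Function.onFun Disjoint fun k : ℤ => Ico (t k) (t (k + 1))) := by
      have := hmono.pairwise_disjoint_on_Ico_succ
      simpa [Order.succ_eq_add_one] using this
    calc ∑' k, y k ^ q.toReal
        ≤ ∑' k, 2 * ∫⁻ u in Ico (t k) (t (k + 1)), F u ^ q.toReal :=
          ENNReal.tsum_le_tsum fun k => block_low hq h (ht k) (h2 k) (hF k)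
      _ = 2 * ∑' k, ∫⁻ u in Ico (t k) (t (k + 1)), F u ^ q.toReal := ENNReal.tsum_mul_left
      _ = 2 * ∫⁻ u in ⋃ k, Ico (t k) (t (k + 1)), F u ^ q.toReal := by
          rw [lintegral_iUnion (fun k => measurableSet_Ico) hdisj]
      _ ≤ _ := by
          gcongr
          exact iUnion_subset hsub

end Discr

section SV

/-- Working form of slow variation. -/
def SVp (b : ℝ → ℝ) : Prop :=
  (∀ t, 0 < t → 0 < b t) ∧ ∀ ε : ℝ, 0 < ε → ∃ C : ℝ, 1 ≤ C ∧ ∀ s t, 0 < s → s ≤ t →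
    b t ≤ C * (t / s) ^ ε * b s ∧ b s ≤ C * (t / s) ^ ε * b t

theorem SlowlyVarying.svp {b : ℝ → ℝ} (h : SlowlyVarying b) : SVp b := by
  obtain ⟨-, hpos, hsv⟩ := h
  refine ⟨hpos, fun ε hε => ?_⟩
  obtain ⟨⟨g, hg, C, hC, hgC⟩, ⟨g', hg', C', hC', hgC'⟩⟩ := hsv ε hε
  refine ⟨1 + C * C + C' * C', by nlinarith [mul_pos hC hC, mul_pos hC' hC'],
    fun s t hs hst => ?_⟩
  have ht : 0 < t := hs.trans_le hst
  have hbs := hpos s hs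
  have hbt := hpos t ht
  have hdiv : (t / s) ^ ε = t ^ ε / s ^ ε := Real.div_rpow ht.le hs.le ε
  have hsε : 0 < s ^ ε := Real.rpow_pos_of_pos hs ε
  have htε : 0 < t ^ ε := Real.rpow_pos_of_pos ht ε
  have hq : 0 < (t / s) ^ ε := Real.rpow_pos_of_pos (div_pos ht hs) ε
  constructor
  · have h1 := (hgC' t ht).2
    have h2 := (hgC' s hs).1
    have h3 := hg' hs ht hst
    simp only at h1 h2
    rw [inv_mul_le_iff₀ hC'] at h2
    have h4 : t ^ (-ε) * b t ≤ C' * (C' * (s ^ (-ε) * b s)) :=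
      h1.trans (mul_le_mul_of_nonneg_left (h3.trans h2) hC'.le)
    rw [Real.rpow_neg ht.le, Real.rpow_neg hs.le, inv_mul_le_iff₀ htε] at h4
    have h5 : b t ≤ C' * C' * (t / s) ^ ε * b s := by
      refine h4.trans (le_of_eq ?_)
      rw [hdiv]; field_simp
    refine h5.trans ?_
    gcongr
    nlinarith [mul_pos hC hC]
  · have h1 := (hgC s hs).2
    have h2 := (hgC t ht).1
    have h3 := hg hs ht hst
    simp only at h1 h2
    rw [inv_mul_le_iff₀ hC] at h2
    have h4 : s ^ ε * b s ≤ C * (C * (t ^ ε * b t)) :=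
      h1.trans (mul_le_mul_of_nonneg_left (h3.trans h2) hC.le)
    rw [← le_div_iff₀' hsε] at h4
    have h5 : b s ≤ C * C * (t / s) ^ ε * b t := by
      refine h4.trans (le_of_eq ?_)
      rw [hdiv]; field_simp
    refine h5.trans ?_
    gcongr
    nlinarith [mul_pos hC' hC']

theorem SVp.mul {a b : ℝ → ℝ} (ha : SVp a) (hb : SVp b) : SVp (fun t => a t * b t) := by
  refine ⟨fun t ht => mul_pos (ha.1 t ht) (hb.1 t ht), fun ε hε => ?_⟩
  obtain ⟨C, hC, h⟩ := ha.2 (ε / 2) (by linarith)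
  obtain ⟨C', hC', h'⟩ := hb.2 (ε / 2) (by linarith)
  refine ⟨C * C', by nlinarith, fun s t hs hst => ?_⟩
  have ht : 0 < t := hs.trans_le hst
  have e : (t / s) ^ ε = (t / s) ^ (ε / 2) * (t / s) ^ (ε / 2) := by
    rw [← Real.rpow_add (div_pos ht hs)]; congr 1; ring
  have hq : 0 < (t / s) ^ (ε / 2) := Real.rpow_pos_of_pos (div_pos ht hs) _
  obtain ⟨h1, h2⟩ := h s t hs hst
  obtain ⟨h1', h2'⟩ := h' s t hs hst
  have := ha.1 s hs
  have := ha.1 t ht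
  have := hb.1 s hs
  have := hb.1 t ht
  rw [e]
  constructor
  · calc a t * b t ≤ (C * (t / s) ^ (ε / 2) * a s) * (C' * (t / s) ^ (ε / 2) * b s) := by gcongr
      _ = _ := by ring
  · calc a s * b s ≤ (C * (t / s) ^ (ε / 2) * a t) * (C' * (t / s) ^ (ε / 2) * b t) := by gcongr
      _ = _ := by ring

theorem SVp.inv {a : ℝ → ℝ} (ha : SVp a) : SVp (fun t => (a t)⁻¹) := by
  refine ⟨fun t ht => inv_pos.2 (ha.1 t ht), fun ε hε => ?_⟩
  obtain ⟨C, hC, h⟩ := ha.2 ε hε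
  refine ⟨C, hC, fun s t hs hst => ?_⟩
  have ht : 0 < t := hs.trans_le hst
  obtain ⟨h1, h2⟩ := h s t hs hst
  have h3 := ha.1 s hs
  have h4 := ha.1 t ht
  constructor
  · rw [← div_eq_mul_inv, le_div_iff₀ h3, inv_mul_le_iff₀ h4]; linarith
  · rw [← div_eq_mul_inv, le_div_iff₀ h4, inv_mul_le_iff₀ h3]; linarith

theorem SVp.div {a b : ℝ → ℝ} (ha : SVp a) (hb : SVp b) : SVp (fun t => a t / b t) := by
  simpa only [div_eq_mul_inv] using ha.mul hb.inv

/-- Comparable values on intervals of bounded ratio. -/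
def Dbl (W : ℝ → ℝ) : Prop :=
  (∀ t, 0 < t → 0 < W t) ∧ ∀ Λ : ℝ, 1 ≤ Λ → ∃ C : ℝ, 1 ≤ C ∧ ∀ s t, 0 < s → s ≤ t → t ≤ Λ * s →
    W t ≤ C * W s ∧ W s ≤ C * W t

theorem SVp.dbl {b : ℝ → ℝ} (h : SVp b) : Dbl b := by
  refine ⟨h.1, fun Λ hΛ => ?_⟩
  obtain ⟨C, hC, hb⟩ := h.2 1 one_pos
  refine ⟨C * Λ, by nlinarith, fun s t hs hst hts => ?_⟩
  obtain ⟨h1, h2⟩ := hb s t hs hst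
  have ht : 0 < t := hs.trans_le hst
  have hle : t / s ≤ Λ := (div_le_iff₀ hs).2 hts
  rw [Real.rpow_one] at h1 h2
  have := h.1 s hs
  have := h.1 t ht
  constructor
  · refine h1.trans ?_
    gcongr
  · refine h2.trans ?_
    gcongr

theorem Dbl.mul {a b : ℝ → ℝ} (ha : Dbl a) (hb : Dbl b) : Dbl (fun t => a t * b t) := by
  refine ⟨fun t ht => mul_pos (ha.1 t ht) (hb.1 t ht), fun Λ hΛ => ?_⟩
  obtain ⟨C, hC, h⟩ := ha.2 Λ hΛ
  obtain ⟨C', hC', h'⟩ := hb.2 Λ hΛ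
  refine ⟨C * C', by nlinarith, fun s t hs hst hts => ?_⟩
  have ht : 0 < t := hs.trans_le hst
  obtain ⟨h1, h2⟩ := h s t hs hst hts
  obtain ⟨h1', h2'⟩ := h' s t hs hst hts
  have := ha.1 s hs
  have := ha.1 t ht
  have := hb.1 s hs
  have := hb.1 t ht
  constructor
  · calc a t * b t ≤ (C * a s) * (C' * b s) := by gcongr
      _ = _ := by ring
  · calc a s * b s ≤ (C * a t) * (C' * b t) := by gcongr
      _ = _ := by ring

theorem Dbl.rpow {a : ℝ → ℝ} (ha : Dbl a) {e : ℝ} (he : 0 ≤ e) : Dbl (fun t => a t ^ e) := by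
  refine ⟨fun t ht => Real.rpow_pos_of_pos (ha.1 t ht) _, fun Λ hΛ => ?_⟩
  obtain ⟨C, hC, h⟩ := ha.2 Λ hΛ
  refine ⟨C ^ e, Real.one_le_rpow hC he, fun s t hs hst hts => ?_⟩
  have ht : 0 < t := hs.trans_le hst
  obtain ⟨h1, h2⟩ := h s t hs hst hts
  have h3 := ha.1 s hs
  have h4 := ha.1 t ht
  rw [← Real.mul_rpow (by linarith) h3.le, ← Real.mul_rpow (by linarith) h4.le]
  exact ⟨Real.rpow_le_rpow h4.le h1 he, Real.rpow_le_rpow h3.le h2 he⟩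

theorem dbl_pow (α : ℝ) : Dbl (fun t => t ^ α) := by
  refine ⟨fun t ht => Real.rpow_pos_of_pos ht _, fun Λ hΛ => ?_⟩
  refine ⟨Λ ^ |α|, Real.one_le_rpow hΛ (abs_nonneg _), fun s t hs hst hts => ?_⟩
  have ht : 0 < t := hs.trans_le hst
  have hle : t / s ≤ Λ := (div_le_iff₀ hs).2 hts
  have h1 : 1 ≤ t / s := (one_le_div hs).2 hst
  have key : ∀ β : ℝ, (t / s) ^ β ≤ Λ ^ |α| ∨ |α| < β := fun β => by
    by_cases h : β ≤ |α|
    · left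
      exact (Real.rpow_le_rpow_of_exponent_le h1 h).trans
        (Real.rpow_le_rpow (by positivity) hle (abs_nonneg _))
    · right; linarith
  have hs' : 0 < s ^ α := Real.rpow_pos_of_pos hs α
  have ht' : 0 < t ^ α := Real.rpow_pos_of_pos ht α
  constructor
  · have := (key α).resolve_right (not_lt.2 (le_abs_self α))
    rwa [Real.div_rpow ht.le hs.le, div_le_iff₀ hs'] at this
  · have := (key (-α)).resolve_right (not_lt.2 (neg_le_abs α))
    rwa [Real.rpow_neg (by positivity), Real.div_rpow ht.le hs.le, inv_div, div_le_iff₀ ht'] at this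

theorem Lq_scale {r : ℝ≥0∞} (F : ℝ → ℝ≥0∞) {κ t : ℝ} (hκ : 0 < κ) :
    LqNorm r (Ioi (κ * t)) F =
      ENNReal.ofReal (κ ^ r⁻¹.toReal) * LqNorm r (Ioi t) (fun x => F (κ * x)) := by
  have hemb : MeasurableEmbedding (fun x : ℝ => κ * x) :=
    (Homeomorph.mulLeft₀ κ hκ.ne').measurableEmbedding
  have hμ : volume.restrict (Ioi (κ * t)) =
      ENNReal.ofReal κ • Measure.map (fun x => κ * x) (volume.restrict (Ioi t)) := by
    have h1 := Real.smul_map_volume_mul_left hκ.ne'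
    rw [abs_of_pos hκ] at h1
    conv_lhs => rw [← h1]
    rw [Measure.restrict_smul, hemb.restrict_map]
    congr 3
    ext x
    simp [hκ, mul_div_cancel_left₀ _ hκ.ne']
  have hκ0 : ENNReal.ofReal κ ≠ 0 := by simpa using hκ
  rw [LqNorm_eq, LqNorm_eq, hμ]
  unfold Lm
  split_ifs with h
  · subst h
    rw [essSup_ennreal_smul_measure hκ0, hemb.essSup_map_measure]
    simp [Function.comp_def]
  · rw [lintegral_smul_measure, hemb.lintegral_map, smul_eq_mul,
      ENNReal.mul_rpow_of_nonneg _ _ ENNReal.toReal_nonneg,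
      ENNReal.ofReal_rpow_of_pos hκ]

theorem tail_mono (r : ℝ≥0∞) (F : ℝ → ℝ≥0∞) {s t : Set ℝ} (h : s ⊆ t) :
    LqNorm r s F ≤ LqNorm r t F := by
  unfold LqNorm
  split_ifs
  · exact essSup_mono_measure' (Measure.restrict_mono h le_rfl)
  · exact ENNReal.rpow_le_rpow (lintegral_mono_set h) ENNReal.toReal_nonneg

/-- The tail norm function. -/
def tailB (r : ℝ≥0∞) (w : ℝ → ℝ) (t : ℝ) : ℝ≥0∞ := LqNorm r (Ioi t) (svWgt r w)

theorem tailB_le {r : ℝ≥0∞} (hr : 0 < r) {w : ℝ → ℝ} (hw : SVp w) {ε : ℝ} (hε : 0 < ε) :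
    ∃ C : ℝ, 1 ≤ C ∧ ∀ s t, 0 < s → s ≤ t →
      tailB r w s ≤ ENNReal.ofReal (C * (t / s) ^ ε) * tailB r w t := by
  obtain ⟨C, hC, h⟩ := hw.2 ε hε
  refine ⟨C, hC, fun s t hs hst => ?_⟩
  have ht : 0 < t := hs.trans_le hst
  have hκ : 0 < s / t := div_pos hs ht
  have e : s = s / t * t := by field_simp
  set κ := s / t with hκd
  have hq : 0 < κ ^ r⁻¹.toReal := Real.rpow_pos_of_pos hκ _
  unfold tailB
  conv_lhs => rw [e]
  rw [Lq_scale _ hκ]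
  have hle : LqNorm r (Ioi t) (fun x => svWgt r w (κ * x)) ≤
      ENNReal.ofReal ((κ ^ r⁻¹.toReal)⁻¹ * (C * (t / s) ^ ε)) * LqNorm r (Ioi t) (svWgt r w) := by
    rw [LqNorm_eq, LqNorm_eq, ← Lm_const_mul_of_ne_top hr ENNReal.ofReal_ne_top]
    refine Lm_mono ?_
    filter_upwards [ae_restrict_mem measurableSet_Ioi] with x hx
    have hx0 : 0 < x := ht.trans hx
    have hκ1 : κ ≤ 1 := (div_le_one ht).2 hst
    unfold svWgt
    rw [← ENNReal.ofReal_mul (by positivity)]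
    apply ENNReal.ofReal_le_ofReal
    have h1 := (h (κ * x) x (by positivity) (by nlinarith)).2
    have e2 : x / (κ * x) = t / s := by rw [hκd]; field_simp
    rw [e2] at h1
    rw [Real.mul_rpow hκ.le hx0.le, Real.rpow_neg hκ.le]
    calc (κ ^ r⁻¹.toReal)⁻¹ * x ^ (-r⁻¹.toReal) * w (κ * x)
        ≤ (κ ^ r⁻¹.toReal)⁻¹ * x ^ (-r⁻¹.toReal) * (C * (t / s) ^ ε * w x) := by gcongr
      _ = _ := by ring
  refine (mul_le_mul_right hle _).trans (le_of_eq ?_)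
  rw [← mul_assoc, ← ENNReal.ofReal_mul hq.le]
  congr 2
  field_simp

theorem tailB_pos {r : ℝ≥0∞} (hr : 0 < r) {w : ℝ → ℝ} (hw : SVp w) {t : ℝ} (ht : 0 < t) :
    tailB r w t ≠ 0 := by
  intro h0
  obtain ⟨C, hC, hlow⟩ := single_low hr
  obtain ⟨D, hD, hdb⟩ := hw.dbl.2 4 (by norm_num)
  have h2 := hlow (Ioi t) (svWgt r w) (ENNReal.ofReal (D⁻¹ * w t)) (2 * t) (4 * t)
    (by linarith) (by linarith) (fun u hu => by have := hu.1; simp only [mem_Ioi]; linarith) ?_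
  · unfold tailB at h0
    rw [h0, mul_zero, nonpos_iff_eq_zero, ENNReal.ofReal_eq_zero] at h2
    have : 0 < D⁻¹ * w t := mul_pos (by positivity) (hw.1 t ht)
    linarith
  · intro u hu1 hu2
    unfold svWgt
    have hu : 0 < u := by linarith
    rw [← ENNReal.ofReal_mul (by positivity)]
    apply ENNReal.ofReal_le_ofReal
    gcongr
    rw [inv_mul_le_iff₀ (by linarith)]
    exact (hdb t u ht (by linarith) hu2.le).2

theorem tailB_ne_top {r : ℝ≥0∞} (hr : 0 < r) {w : ℝ → ℝ} (hw : SVp w)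
    (hfin : tailB r w 1 ≠ ∞) {t : ℝ} (ht : 0 < t) : tailB r w t ≠ ∞ := by
  rcases le_total t 1 with h | h
  · obtain ⟨C, hC, hB⟩ := tailB_le hr hw one_pos
    exact ne_top_of_le_ne_top (ENNReal.mul_ne_top ENNReal.ofReal_ne_top hfin) (hB t 1 ht h)
  · exact ne_top_of_le_ne_top hfin (tail_mono _ _ (Ioi_subset_Ioi h))

theorem svp_tailB {r : ℝ≥0∞} (hr : 0 < r) {w : ℝ → ℝ} (hw : SVp w)
    (hfin : tailB r w 1 ≠ ∞) : SVp (fun t => (tailB r w t).toReal) := by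
  refine ⟨fun t ht => ENNReal.toReal_pos (tailB_pos hr hw ht) (tailB_ne_top hr hw hfin ht),
    fun ε hε => ?_⟩
  obtain ⟨C, hC, hB⟩ := tailB_le hr hw hε
  refine ⟨C, hC, fun s t hs hst => ?_⟩
  have ht : 0 < t := hs.trans_le hst
  have h1 : 1 ≤ (t / s) ^ ε := Real.one_le_rpow ((one_le_div hs).2 hst) hε.le
  constructor
  · have : (tailB r w t).toReal ≤ (tailB r w s).toReal :=
      ENNReal.toReal_mono (tailB_ne_top hr hw hfin hs) (tail_mono _ _ (Ioi_subset_Ioi hst))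
    refine this.trans (le_mul_of_one_le_left ENNReal.toReal_nonneg ?_)
    nlinarith
  · have := ENNReal.toReal_mono
      (ENNReal.mul_ne_top ENNReal.ofReal_ne_top (tailB_ne_top hr hw hfin ht)) (hB s t hs hst)
    rwa [ENNReal.toReal_mul, ENNReal.toReal_ofReal (by positivity)] at this

end SV

section KL

/-- Quasi-concavity type bounds satisfied by K-functionals. -/
def QM (H : ℝ → ℝ≥0∞) : Prop :=
  ∀ s t : ℝ, 0 < s → s ≤ t → H s ≤ H t ∧ H t ≤ ENNReal.ofReal (t / s) * H s

theorem Kf_qm {E : Type*} [AddCommGroup E] (N₀ N₁ : E → ℝ≥0∞) (f : E) :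
    QM (fun t => Kf N₀ N₁ t f) := by
  intro s t hs hst
  constructor
  · unfold Kf
    refine iInf_mono fun g => ?_
    gcongr
  · unfold Kf
    rw [ENNReal.mul_iInf_of_ne (by simpa using div_pos (hs.trans_le hst) hs)
      ENNReal.ofReal_ne_top]
    refine iInf_mono fun g => ?_
    rw [mul_add, ← mul_assoc, ← ENNReal.ofReal_mul (div_pos (hs.trans_le hst) hs).le,
      div_mul_cancel₀ _ hs.ne']
    gcongr
    refine le_mul_of_one_le_left zero_le ?_
    rw [← ENNReal.ofReal_one]
    exact ENNReal.ofReal_le_ofReal ((one_le_div hs).2 hst)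

theorem weight_cmp {W : ℝ → ℝ} (hW : Dbl W) {Λ : ℝ} (hΛ : 1 ≤ Λ) :
    ∃ D : ℝ≥0∞, D ≠ ∞ ∧ ∀ H, QM H → ∀ x u, 0 < x → x ≤ u → u ≤ Λ * x →
      ENNReal.ofReal (W u) * H u ≤ D * (ENNReal.ofReal (W x) * H x) ∧
      ENNReal.ofReal (W x) * H x ≤ D * (ENNReal.ofReal (W u) * H u) := by
  obtain ⟨C, hC, h⟩ := hW.2 Λ hΛ
  have hC0 : 0 ≤ C := by linarith
  have hL0 : 0 ≤ Λ := by linarith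
  refine ⟨ENNReal.ofReal C * ENNReal.ofReal Λ,
    ENNReal.mul_ne_top ENNReal.ofReal_ne_top ENNReal.ofReal_ne_top,
    fun H hH x u hx hxu hux => ?_⟩
  obtain ⟨h1, h2⟩ := h x u hx hxu hux
  obtain ⟨h3, h4⟩ := hH x u hx hxu
  have h1' := ENNReal.ofReal_le_ofReal h1
  have h2' := ENNReal.ofReal_le_ofReal h2
  rw [ENNReal.ofReal_mul hC0] at h1' h2'
  constructor
  · calc ENNReal.ofReal (W u) * H u
        ≤ (ENNReal.ofReal C * ENNReal.ofReal (W x)) * (ENNReal.ofReal (u / x) * H x) := by gcongr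
      _ ≤ (ENNReal.ofReal C * ENNReal.ofReal (W x)) * (ENNReal.ofReal Λ * H x) := by
          gcongr
          exact (div_le_iff₀ hx).2 hux
      _ = _ := by ring
  · calc ENNReal.ofReal (W x) * H x
        ≤ (ENNReal.ofReal C * ENNReal.ofReal (W u)) * (1 * H u) := by rw [one_mul]; gcongr
      _ ≤ (ENNReal.ofReal C * ENNReal.ofReal (W u)) * (ENNReal.ofReal Λ * H u) := by
          gcongr
          rw [← ENNReal.ofReal_one]
          exact ENNReal.ofReal_le_ofReal hΛ
      _ = _ := by ring

/-- Admissible discretising sequence. -/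
def Adm (t : ℤ → ℝ) (Λ : ℝ) : Prop :=
  1 ≤ Λ ∧ (∀ k, 0 < t k) ∧ (∀ k, 2 * t k ≤ t (k + 1)) ∧ (∀ k, t (k + 1) ≤ Λ * t k) ∧
    ∀ x, 0 < x → ∃ k, t k ≤ x ∧ x < t (k + 1)

theorem wgt_split {u : ℝ} (hu : 0 < u) (θ e : ℝ) (b : ℝ → ℝ) (h : ℝ≥0∞) :
    ENNReal.ofReal (u ^ (-θ - e) * b u) * h =
      ENNReal.ofReal (u ^ (-e)) * (ENNReal.ofReal (u ^ (-θ) * b u) * h) := by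
  rw [← mul_assoc, ← ENNReal.ofReal_mul (Real.rpow_nonneg hu.le _)]
  congr 2
  rw [← mul_assoc, ← Real.rpow_add hu]
  congr 2
  ring

theorem normK_discr {t : ℤ → ℝ} {Λ : ℝ} (ht : Adm t Λ) (θ : ℝ) {r : ℝ≥0∞} (hr : 0 < r)
    {b : ℝ → ℝ} (hb : Dbl b) :
    ∃ C : ℝ≥0∞, C ≠ ∞ ∧ ∀ H, QM H →
      LqNorm r (Ioi 0) (fun u => ENNReal.ofReal (u ^ (-θ - r⁻¹.toReal) * b u) * H u) ≤
        C * ell r (fun k => ENNReal.ofReal (t k ^ (-θ) * b (t k)) * H (t k)) ∧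
      ell r (fun k => ENNReal.ofReal (t k ^ (-θ) * b (t k)) * H (t k)) ≤
        C * LqNorm r (Ioi 0) (fun u => ENNReal.ofReal (u ^ (-θ - r⁻¹.toReal) * b u) * H u) := by
  obtain ⟨hΛ, h0, h2, hL, hcov⟩ := ht
  obtain ⟨D, hD, hcmp⟩ := weight_cmp ((dbl_pow (-θ)).mul hb) hΛ
  obtain ⟨C₁, hC₁, hup⟩ := discr_up h0 hL hcov hr
  obtain ⟨C₂, hC₂, hlow⟩ := discr_low h0 h2 hr
  refine ⟨C₁ * D + C₂ * D, ENNReal.add_ne_top.2 ⟨ENNReal.mul_ne_top hC₁ hD,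
    ENNReal.mul_ne_top hC₂ hD⟩, fun H hH => ⟨?_, ?_⟩⟩
  · refine (hup (Ioi 0) _ (fun k => D * (ENNReal.ofReal (t k ^ (-θ) * b (t k)) * H (t k)))
      measurableSet_Ioi subset_rfl ?_).trans ?_
    · intro k u hu h1 h2
      rw [wgt_split hu]
      exact mul_le_mul_right (hcmp H hH (t k) u (h0 k) h1 (h2.le.trans (hL k))).1 _
    · rw [ell, Lm_const_mul_of_ne_top hr hD, ← mul_assoc]
      gcongr
      · exact le_self_add
      · exact le_rfl
  · refine (hlow (fun u => D * (ENNReal.ofReal (u ^ (-θ - r⁻¹.toReal) * b u) * H u)) _ ?_).trans ?_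
    · intro k u h1 h2
      rw [wgt_split ((h0 k).trans_le h1), mul_left_comm D]
      exact mul_le_mul_right (hcmp H hH (t k) u (h0 k) h1 (h2.le.trans (hL k))).2 _
    · rw [LqNorm_eq, LqNorm_eq, Lm_const_mul_of_ne_top hr hD, ← mul_assoc]
      gcongr
      exact le_add_self

/-- The lattice functional behind `normL`. -/
def PhiL (σ : ℝ) (r q : ℝ≥0∞) (b a : ℝ → ℝ) (H : ℝ → ℝ≥0∞) : ℝ≥0∞ :=
  LqNorm r (Ioi 0) fun t =>
    ENNReal.ofReal (t ^ (-(r⁻¹.toReal)) * (b t / a t)) *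
      LqNorm q (Ioo 0 t) fun u =>
        ENNReal.ofReal (u ^ (-σ - q⁻¹.toReal) * a u) * H u

theorem svWgt_aem {r : ℝ≥0∞} {b a : ℝ → ℝ} (hb : AEMeasurable b (volume.restrict (Ioi 0)))
    (ha : AEMeasurable a (volume.restrict (Ioi 0))) :
    AEMeasurable (svWgt r (fun s => b s / a s)) (volume.restrict (Ioi 0)) := by
  unfold svWgt
  exact ((Measurable.aemeasurable (by fun_prop)).mul (hb.div ha)).ennreal_ofReal

theorem PhiL_low (σ : ℝ) {r q : ℝ≥0∞} (hr : 0 < r) (hq : 0 < q) {b a : ℝ → ℝ} (ha : SVp a)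
    (hw : AEMeasurable (svWgt r (fun s => b s / a s)) (volume.restrict (Ioi 0))) :
    ∃ C : ℝ≥0∞, C ≠ ∞ ∧ ∀ H, QM H → ∀ t, 0 < t →
      ENNReal.ofReal (t ^ (-σ) * a t) * tailB r (fun s => b s / a s) t * H t ≤
        C * PhiL σ r q b a H := by
  obtain ⟨D, hD, hcmp⟩ := weight_cmp ((dbl_pow (-σ)).mul ha.dbl) (one_le_two)
  obtain ⟨C₁, hC₁, hlow⟩ := single_low hq
  refine ⟨C₁ * D, ENNReal.mul_ne_top hC₁ hD, fun H hH t ht => ?_⟩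
  set Y := ENNReal.ofReal (t ^ (-σ) * a t) * H t with hY
  have inner : ∀ x, t < x → Y ≤ C₁ * D * LqNorm q (Ioo 0 x) (fun u =>
        ENNReal.ofReal (u ^ (-σ - q⁻¹.toReal) * a u) * H u) := by
    intro x hx
    refine (hlow (Ioo 0 x) (fun u => D * (ENNReal.ofReal (u ^ (-σ - q⁻¹.toReal) * a u) * H u)) Y
      (t / 2) t (by linarith) (by linarith) (fun u hu => ⟨by linarith [hu.1], hu.2.trans hx⟩)
      ?_).trans ?_
    · intro u h1 h2
      have hu : 0 < u := by linarith
      rw [wgt_split hu, mul_left_comm D]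
      gcongr
      exact (hcmp H hH u t hu h2.le (by linarith)).1
    · rw [LqNorm_eq, LqNorm_eq, Lm_const_mul_of_ne_top hq hD, mul_assoc]
  have hsub : Ioi t ⊆ Ioi (0:ℝ) := Ioi_subset_Ioi ht.le
  have hw' : AEMeasurable (svWgt r (fun s => b s / a s)) (volume.restrict (Ioi t)) :=
    hw.mono_measure (Measure.restrict_mono hsub le_rfl)
  calc ENNReal.ofReal (t ^ (-σ) * a t) * tailB r (fun s => b s / a s) t * H t
      = Y * tailB r (fun s => b s / a s) t := by rw [hY]; ring
    _ = LqNorm r (Ioi t) (fun x => Y * svWgt r (fun s => b s / a s) x) := by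
        rw [LqNorm_eq, Lm_const_mul hr hw']; rfl
    _ ≤ LqNorm r (Ioi t) (fun x => (C₁ * D) * (ENNReal.ofReal (x ^ (-(r⁻¹.toReal)) * (b x / a x)) *
          LqNorm q (Ioo 0 x) fun u =>
            ENNReal.ofReal (u ^ (-σ - q⁻¹.toReal) * a u) * H u)) := by
        rw [LqNorm_eq, LqNorm_eq]
        refine Lm_mono ?_
        filter_upwards [ae_restrict_mem measurableSet_Ioi] with x hx
        rw [mul_left_comm, mul_comm Y]
        unfold svWgt
        gcongr
        exact inner x hx
    _ = (C₁ * D) * LqNorm r (Ioi t) (fun x => (ENNReal.ofReal (x ^ (-(r⁻¹.toReal)) * (b x / a x)) *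
          LqNorm q (Ioo 0 x) fun u =>
            ENNReal.ofReal (u ^ (-σ - q⁻¹.toReal) * a u) * H u)) := by
        rw [LqNorm_eq, LqNorm_eq, Lm_const_mul_of_ne_top hr (ENNReal.mul_ne_top hC₁ hD)]
    _ ≤ _ := by
        gcongr
        exact tail_mono _ _ hsub

theorem Lm_indicator {r : ℝ≥0∞} (hr : 0 < r) {s t : Set ℝ} (ht : MeasurableSet t) (hts : t ⊆ s)
    (g : ℝ → ℝ≥0∞) :
    Lm r (volume.restrict s) (t.indicator g) = Lm r (volume.restrict t) g := by
  have e : (volume.restrict s).restrict t = volume.restrict t := by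
    rw [Measure.restrict_restrict ht, inter_eq_self_of_subset_left hts]
  unfold Lm
  split_ifs with h
  · rw [ENNReal.essSup_indicator_eq_essSup_restrict ht, e]
  · have hr' : 0 < r.toReal := ENNReal.toReal_pos hr.ne' h
    have : ∀ x, t.indicator g x ^ r.toReal = t.indicator (fun x => g x ^ r.toReal) x := by
      intro x
      by_cases hx : x ∈ t
      · simp [hx]
      · simp [hx, hr']
    simp_rw [this]
    rw [lintegral_indicator ht, e]

theorem PhiL_up {t : ℤ → ℝ} {Λ : ℝ} (ht : Adm t Λ) (σ : ℝ) {r q : ℝ≥0∞} (hr : 0 < r) (hq : 0 < q)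
    {b a : ℝ → ℝ} (ha : SVp a)
    (hw : AEMeasurable (svWgt r (fun s => b s / a s)) (volume.restrict (Ioi 0)))
    {p : ℝ} (hp : 0 < p) (hpq : ENNReal.ofReal p ≤ q) (hpr : ENNReal.ofReal p ≤ r) :
    ∃ C : ℝ≥0∞, C ≠ ∞ ∧ ∀ H, QM H →
      PhiL σ r q b a H ≤ C * (∑' j, (ENNReal.ofReal (t j ^ (-σ) * a (t j)) *
        tailB r (fun s => b s / a s) (t j) * H (t j)) ^ p) ^ p⁻¹ := by
  obtain ⟨hΛ, h0, h2, hL, hcov⟩ := ht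
  obtain ⟨D, hD, hcmp⟩ := weight_cmp ((dbl_pow (-σ)).mul ha.dbl) hΛ
  obtain ⟨C₁, hC₁, hup⟩ := discr_up h0 hL hcov hq
  refine ⟨C₁ * D, ENNReal.mul_ne_top hC₁ hD, fun H hH => ?_⟩
  set w : ℝ → ℝ≥0∞ := svWgt r (fun s => b s / a s) with hwd
  set y : ℤ → ℝ≥0∞ := fun j => ENNReal.ofReal (t j ^ (-σ) * a (t j)) * H (t j) with hy
  set F : ℤ → ℝ → ℝ≥0∞ := fun j => (Ioi (t j)).indicator (fun x => y j * w x) with hF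
  have hFm : ∀ j, AEMeasurable (F j) (volume.restrict (Ioi 0)) := fun j =>
    (hw.const_mul _).indicator measurableSet_Ioi
  have inner : ∀ x, 0 < x → w x * LqNorm q (Ioo 0 x) (fun u =>
        ENNReal.ofReal (u ^ (-σ - q⁻¹.toReal) * a u) * H u) ≤
        (C₁ * D) * (∑' j, F j x ^ p) ^ p⁻¹ := by
    intro x hx
    have h1 := hup (Ioo 0 x) (fun u => ENNReal.ofReal (u ^ (-σ - q⁻¹.toReal) * a u) * H u)
      (fun j => D * (if t j < x then y j else 0)) measurableSet_Ioo (fun u hu => hu.1) (by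
        intro k u hu hk1 hk2
        rw [wgt_split hu.1, if_pos (hk1.trans_lt hu.2)]
        exact mul_le_mul_right (hcmp H hH (t k) u (h0 k) hk1 (hk2.le.trans (hL k))).1 _)
    rw [ell, Lm_const_mul_of_ne_top hq hD, ← mul_assoc] at h1
    have h3 := ell_le_tsum hp hpq (fun j => if t j < x then y j else 0)
    calc _ ≤ w x * (C₁ * D * (∑' j, (if t j < x then y j else 0) ^ p) ^ p⁻¹) := by
          gcongr
          exact h1.trans (by gcongr; exact h3)
      _ = (C₁ * D) * (w x ^ p * (∑' j, (if t j < x then y j else 0) ^ p)) ^ p⁻¹ := by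
          rw [ENNReal.mul_rpow_of_nonneg _ _ (inv_pos.2 hp).le, ← ENNReal.rpow_mul,
            mul_inv_cancel₀ hp.ne', ENNReal.rpow_one]
          ring
      _ = (C₁ * D) * (∑' j, F j x ^ p) ^ p⁻¹ := by
          rw [← ENNReal.tsum_mul_left]
          congr 3
          ext j
          rw [← ENNReal.mul_rpow_of_nonneg _ _ hp.le]
          congr 1
          simp only [hF, indicator_apply, mem_Ioi]
          split_ifs <;> ring
  have hp1 : 1 ≤ r / ENNReal.ofReal p := by
    rw [ENNReal.le_div_iff_mul_le (Or.inl (by simpa using hp)) (Or.inl ENNReal.ofReal_ne_top)]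
    simpa using hpr
  have hS : Lm r (volume.restrict (Ioi 0)) (fun x => (∑' j, F j x ^ p) ^ p⁻¹) ^ p ≤
      ∑' j, (ENNReal.ofReal (t j ^ (-σ) * a (t j)) *
        tailB r (fun s => b s / a s) (t j) * H (t j)) ^ p := by
    rw [← Lm_rpow hp hr]
    simp_rw [← ENNReal.rpow_mul, inv_mul_cancel₀ hp.ne', ENNReal.rpow_one]
    refine (Lm_tsum_le hp1 (fun j => (hFm j).pow_const p)).trans ?_
    refine ENNReal.tsum_le_tsum fun j => ?_
    rw [Lm_rpow hp hr]
    refine ENNReal.rpow_le_rpow ?_ hp.le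
    have hsub : Ioi (t j) ⊆ Ioi (0:ℝ) := Ioi_subset_Ioi (h0 j).le
    rw [hF, Lm_indicator hr measurableSet_Ioi hsub,
      Lm_const_mul hr (hw.mono_measure (Measure.restrict_mono hsub le_rfl))]
    apply le_of_eq
    rw [hy]
    simp only [tailB, LqNorm_eq]
    ring
  have hS' := ENNReal.rpow_le_rpow hS (inv_pos.2 hp).le
  rw [← ENNReal.rpow_mul, mul_inv_cancel₀ hp.ne', ENNReal.rpow_one] at hS'
  refine le_trans ?_ (mul_le_mul_right hS' _)
  rw [← Lm_const_mul_of_ne_top hr (ENNReal.mul_ne_top hC₁ hD), PhiL, LqNorm_eq]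
  refine Lm_mono ?_
  filter_upwards [ae_restrict_mem measurableSet_Ioi] with x hx
  exact inner x hx

end KL

section Seqs

theorem seq_growth {u : ℤ → ℝ} (h2 : ∀ k, 2 * u k ≤ u (k + 1)) (k : ℤ) (n : ℕ) :
    2 ^ n * u k ≤ u (k + n) := by
  induction n with
  | zero => simp
  | succ n ih =>
    have := h2 (k + n)
    rw [pow_succ]
    push_cast
    rw [← add_assoc]
    linarith

theorem adm_of {u : ℤ → ℝ} {Λ : ℝ} (h0 : ∀ k, 0 < u k) (h2 : ∀ k, 2 * u k ≤ u (k + 1))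
    (hL : ∀ k, u (k + 1) ≤ Λ * u k) : Adm u Λ := by
  have hΛ : 1 ≤ Λ := by
    by_contra h
    push Not at h
    nlinarith [h0 0, h2 0, hL 0]
  have hmono : Monotone u := monotone_int_of_le_succ fun k => by linarith [h0 k, h2 k]
  refine ⟨hΛ, h0, h2, hL, fun x hx => ?_⟩
  have hb : ∃ b : ℤ, ∀ z : ℤ, u z ≤ x → z ≤ b := by
    obtain ⟨n, hn⟩ := pow_unbounded_of_one_lt (x / u 0) (one_lt_two)
    rw [div_lt_iff₀ (h0 0)] at hn
    refine ⟨n, fun z hz => ?_⟩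
    by_contra hlt
    push Not at hlt
    have h3 := seq_growth h2 0 n
    rw [zero_add] at h3
    have := hmono hlt.le
    linarith
  have he : ∃ z : ℤ, u z ≤ x := by
    obtain ⟨n, hn⟩ := pow_unbounded_of_one_lt (u 0 / x) (one_lt_two)
    rw [div_lt_iff₀ hx] at hn
    refine ⟨-n, ?_⟩
    have h3 := seq_growth h2 (-n) n
    rw [neg_add_cancel] at h3
    have h4 : (0:ℝ) < 2 ^ n := by positivity
    by_contra hlt
    push Not at hlt
    nlinarith
  obtain ⟨k, hk, hmax⟩ := Int.exists_greatest_of_bdd hb he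
  refine ⟨k, hk, ?_⟩
  by_contra hlt
  push Not at hlt
  have := hmax (k + 1) hlt
  omega

/-- Geometric weights. -/
def geo (β : ℝ) (i : ℤ) : ℝ≥0∞ := ENNReal.ofReal (2 ^ (-β * |(i : ℝ)|))

theorem geo_neg (β : ℝ) (i : ℤ) : geo β (-i) = geo β i := by simp [geo]

theorem geo_sum {β p : ℝ} (hβ : 0 < β) (hp : 0 < p) : ∑' i, geo β i ^ p ≠ ∞ := by
  have e : ∀ i, geo β i ^ p = ENNReal.ofReal (2 ^ (-(β * p) * |(i : ℝ)|)) := fun i => by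
    unfold geo
    rw [ENNReal.ofReal_rpow_of_pos (by positivity), ← Real.rpow_mul (by norm_num)]
    congr 2
    ring
  simp_rw [e]
  apply Summable.tsum_ofReal_ne_top
  have hg : Summable (fun n : ℕ => ((2:ℝ) ^ (-(β * p))) ^ n) := by
    apply summable_geometric_of_lt_one (by positivity)
    apply Real.rpow_lt_one_of_one_lt_of_neg (by norm_num)
    have := mul_pos hβ hp
    linarith
  have e2 : ∀ n : ℕ, (2:ℝ) ^ (-(β * p) * (n : ℝ)) = ((2:ℝ) ^ (-(β * p))) ^ n := fun n => by
    rw [Real.rpow_mul (by norm_num), Real.rpow_natCast]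
  apply Summable.of_nat_of_neg
  · refine hg.congr fun n => ?_
    rw [← e2]
    simp
  · refine hg.congr fun n => ?_
    rw [← e2]
    simp

theorem hardy {r : ℝ≥0∞} (hr : 0 < r) {p β : ℝ} (hp : 0 < p) (hβ : 0 < β)
    (hpr : ENNReal.ofReal p ≤ r) :
    ∃ C : ℝ≥0∞, C ≠ ∞ ∧ ∀ x : ℤ → ℝ≥0∞,
      ell r (fun k => (∑' j, (geo β (j - k) * (x j + x k)) ^ p) ^ p⁻¹) ≤ C * ell r x := by
  have hp1 : 1 ≤ r / ENNReal.ofReal p := by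
    rw [ENNReal.le_div_iff_mul_le (Or.inl (by simpa using hp)) (Or.inl ENNReal.ofReal_ne_top)]
    simpa using hpr
  set A : ℝ≥0∞ := 2 ^ p * 2 with hA
  have hAt : A ≠ ∞ := ENNReal.mul_ne_top (ENNReal.rpow_ne_top_of_nonneg hp.le (by simp)) (by simp)
  set S := ∑' i, geo β i ^ p with hS
  have hSt : S ≠ ∞ := geo_sum hβ hp
  refine ⟨(S * A) ^ p⁻¹, ENNReal.rpow_ne_top_of_nonneg (inv_pos.2 hp).le
    (ENNReal.mul_ne_top hSt hAt), fun x => ?_⟩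
  have hp1' : 0 < r / ENNReal.ofReal p := lt_of_lt_of_le one_pos hp1
  have h2p : (2:ℝ≥0∞) ^ p ≠ ∞ := ENNReal.rpow_ne_top_of_nonneg hp.le (by simp)
  have hpair : ∀ i : ℤ, ell (r / ENNReal.ofReal p) (fun k => (x (k + i) + x k) ^ p) ≤
      A * (ell r x) ^ p := fun i => by
    have hpt : ∀ k, (x (k + i) + x k) ^ p ≤ 2 ^ p * (x (k + i) ^ p + x k ^ p) := fun k => by
      have h1 : x (k + i) + x k ≤ 2 * max (x (k + i)) (x k) := by
        rw [two_mul]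
        exact add_le_add (le_max_left _ _) (le_max_right _ _)
      refine (ENNReal.rpow_le_rpow h1 hp.le).trans ?_
      rw [ENNReal.mul_rpow_of_nonneg _ _ hp.le]
      gcongr
      rcases le_total (x (k + i)) (x k) with h | h
      · rw [max_eq_right h]; exact le_add_self
      · rw [max_eq_left h]; exact le_self_add
    refine (ell_le_mul hp1' h2p hpt).trans ?_
    have h3 : ell (r / ENNReal.ofReal p) (fun k => x (k + i) ^ p + x k ^ p) ≤
        ell (r / ENNReal.ofReal p) (fun k => x (k + i) ^ p) +
        ell (r / ENNReal.ofReal p) (fun k => x k ^ p) :=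
      Lm_add_le hp1 (Measurable.of_discrete).aemeasurable (Measurable.of_discrete).aemeasurable
    have h4 : ell (r / ENNReal.ofReal p) (fun k => x k ^ p) = ell r x ^ p := Lm_rpow hp hr x
    rw [ell_shift (r / ENNReal.ofReal p) (fun k => x k ^ p) i, h4] at h3
    refine (mul_le_mul_right h3 _).trans (le_of_eq ?_)
    rw [hA]; ring
  have key : ell r (fun k => (∑' j, (geo β (j - k) * (x j + x k)) ^ p) ^ p⁻¹) ^ p ≤
      S * A * (ell r x) ^ p := by
    unfold ell
    rw [← Lm_rpow hp hr]
    simp_rw [← ENNReal.rpow_mul, inv_mul_cancel₀ hp.ne', ENNReal.rpow_one]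
    have e : ∀ k : ℤ, ∑' j, (geo β (j - k) * (x j + x k)) ^ p =
        ∑' i, geo β i ^ p * (x (k + i) + x k) ^ p := fun k => by
      rw [← (Equiv.addLeft k).tsum_eq]
      refine tsum_congr fun i => ?_
      simp [ENNReal.mul_rpow_of_nonneg _ _ hp.le]
    simp_rw [e]
    refine (Lm_tsum_le hp1 (fun i => (Measurable.of_discrete).aemeasurable)).trans ?_
    rw [hS, ← ENNReal.tsum_mul_right, ← ENNReal.tsum_mul_right]
    refine ENNReal.tsum_le_tsum fun i => ?_
    rw [Lm_const_mul hp1' (Measurable.of_discrete).aemeasurable, mul_assoc]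
    exact mul_le_mul_right (hpair i) _
  have := ENNReal.rpow_le_rpow key (inv_pos.2 hp).le
  rwa [← ENNReal.rpow_mul, mul_inv_cancel₀ hp.ne', ENNReal.rpow_one,
    ENNReal.mul_rpow_of_nonneg _ _ (inv_pos.2 hp).le, ← ENNReal.rpow_mul, mul_inv_cancel₀ hp.ne',
    ENNReal.rpow_one] at this

theorem pow_decay {b : ℝ → ℝ} (hb : SVp b) {α : ℝ} (hα : 0 < α) :
    ∃ C : ℝ, 1 ≤ C ∧ ∀ s t, 0 < s → s ≤ t →
      t ^ (-α) * b t ≤ C * (t / s) ^ (-(α / 2)) * (s ^ (-α) * b s) ∧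
      s ^ α * b s ≤ C * (t / s) ^ (-(α / 2)) * (t ^ α * b t) := by
  obtain ⟨C, hC, h⟩ := hb.2 (α / 2) (by linarith)
  refine ⟨C, hC, fun s t hs hst => ?_⟩
  have ht : 0 < t := hs.trans_le hst
  obtain ⟨h1, h2⟩ := h s t hs hst
  have hd : 0 < t / s := div_pos ht hs
  have e : (t / s) ^ (-(α / 2)) = (t / s) ^ (α / 2) * (t / s) ^ (-α) := by
    rw [← Real.rpow_add hd]; congr 1; ring
  have e2 : (t / s) ^ (-α) = t ^ (-α) * s ^ α := by
    rw [Real.div_rpow ht.le hs.le, Real.rpow_neg hs.le, div_inv_eq_mul]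
  have e3 : s ^ α * s ^ (-α) = 1 := by rw [← Real.rpow_add hs]; simp
  have e4 : t ^ (-α) * t ^ α = 1 := by rw [← Real.rpow_add ht]; simp
  have p1 : 0 < t ^ (-α) := Real.rpow_pos_of_pos ht _
  have p2 : 0 < s ^ α := Real.rpow_pos_of_pos hs _
  rw [e, e2]
  constructor
  · calc t ^ (-α) * b t ≤ t ^ (-α) * (C * (t / s) ^ (α / 2) * b s) := by gcongr
      _ = t ^ (-α) * (C * (t / s) ^ (α / 2) * b s) * (s ^ α * s ^ (-α)) := by rw [e3, mul_one]
      _ = _ := by ring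
  · calc s ^ α * b s ≤ s ^ α * (C * (t / s) ^ (α / 2) * b t) := by gcongr
      _ = s ^ α * (C * (t / s) ^ (α / 2) * b t) * (t ^ (-α) * t ^ α) := by rw [e4, mul_one]
      _ = _ := by ring

theorem seq_decay {t : ℤ → ℝ} {Λ : ℝ} (ht : Adm t Λ) {b : ℝ → ℝ} (hb : SVp b) {α β : ℝ}
    (hα : 0 < α) (hβ : 0 < β) (hβα : β ≤ α / 2) :
    ∃ C : ℝ≥0∞, C ≠ ∞ ∧ ∀ j k : ℤ, j ≤ k →
      ENNReal.ofReal (t k ^ (-α) * b (t k)) ≤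
        C * geo β (j - k) * ENNReal.ofReal (t j ^ (-α) * b (t j)) ∧
      ENNReal.ofReal (t j ^ α * b (t j)) ≤
        C * geo β (j - k) * ENNReal.ofReal (t k ^ α * b (t k)) := by
  obtain ⟨C, hC, h⟩ := pow_decay hb hα
  obtain ⟨hΛ, h0, h2, hL, hcov⟩ := ht
  refine ⟨ENNReal.ofReal C, ENNReal.ofReal_ne_top, fun j k hjk => ?_⟩
  obtain ⟨n, rfl⟩ := Int.le.dest hjk
  have hg := seq_growth h2 j n
  have hle : t j ≤ t (j + n) := by
    have : (1:ℝ) ≤ 2 ^ n := one_le_pow₀ (by norm_num)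
    nlinarith [h0 j]
  obtain ⟨h3, h4⟩ := h (t j) (t (j + n)) (h0 j) hle
  have hr : (2:ℝ) ^ n ≤ t (j + n) / t j := (le_div_iff₀ (h0 j)).2 hg
  have hdec : (t (j + n) / t j) ^ (-(α / 2)) ≤ 2 ^ (-β * |((j - (j + n) : ℤ) : ℝ)|) := by
    have e : |((j - (j + n) : ℤ) : ℝ)| = n := by push_cast; simp
    rw [e]
    calc (t (j + n) / t j) ^ (-(α / 2)) ≤ ((2:ℝ) ^ n) ^ (-(α / 2)) :=
          Real.rpow_le_rpow_of_nonpos (by positivity) hr (by linarith)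
      _ = 2 ^ (-(α / 2) * n) := by
          rw [← Real.rpow_natCast, ← Real.rpow_mul (by norm_num)]; congr 1; ring
      _ ≤ 2 ^ (-β * n) := by
          apply Real.rpow_le_rpow_of_exponent_le (by norm_num)
          have : (0:ℝ) ≤ n := by positivity
          nlinarith
  have hpos : ∀ (γ : ℝ) (i : ℤ), 0 ≤ t i ^ γ * b (t i) := fun γ i =>
    mul_nonneg (Real.rpow_nonneg (h0 i).le _) (hb.1 _ (h0 i)).le
  unfold geo
  rw [← ENNReal.ofReal_mul (by linarith), ← ENNReal.ofReal_mul (by positivity),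
    ← ENNReal.ofReal_mul (by positivity)]
  constructor
  · apply ENNReal.ofReal_le_ofReal
    refine h3.trans ?_
    have := hpos (-α) j
    gcongr
  · apply ENNReal.ofReal_le_ofReal
    refine h4.trans ?_
    have := hpos α (j + n)
    gcongr

end Seqs

section Decomp

theorem QuasiBanach.neg (A : QuasiBanach E) (x : E) : A.N (-x) = A.N x := by
  have := A.smul (-1) x
  simpa using this

theorem Kf_zero (A₀ A₁ : QuasiBanach E) (t : ℝ) : Kf A₀.N A₁.N t 0 = 0 := by
  rw [← nonpos_iff_eq_zero]
  refine (iInf_le _ (0:E)).trans ?_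
  simp [A₀.zero, A₁.zero]

theorem Kf_neg (A₀ A₁ : QuasiBanach E) (t : ℝ) (f : E) :
    Kf A₀.N A₁.N t (-f) = Kf A₀.N A₁.N t f := by
  unfold Kf
  refine (Equiv.neg E).iInf_congr fun g => ?_
  simp only [Equiv.neg_apply]
  rw [A₀.neg, ← A₁.neg (f - -g)]
  congr 3
  abel

theorem Kf_add (A₀ A₁ : QuasiBanach E) : ∃ C : ℝ≥0∞, 1 ≤ C ∧ C ≠ ∞ ∧ ∀ (t : ℝ) (x y : E),
    Kf A₀.N A₁.N t (x + y) ≤ C * (Kf A₀.N A₁.N t x + Kf A₀.N A₁.N t y) := by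
  obtain ⟨C, hC, hCt, h⟩ := A₀.quasi
  obtain ⟨C', hC', hCt', h'⟩ := A₁.quasi
  have hpos : C + C' ≠ 0 := by
    intro h0
    rw [add_eq_zero] at h0
    rw [h0.1] at hC
    simp at hC
  refine ⟨C + C', hC.trans le_self_add, ENNReal.add_ne_top.2 ⟨hCt, hCt'⟩, fun t x y => ?_⟩
  unfold Kf
  rw [ENNReal.iInf_add, ENNReal.mul_iInf_of_ne hpos (ENNReal.add_ne_top.2 ⟨hCt, hCt'⟩)]
  refine le_iInf fun g => ?_
  rw [ENNReal.add_iInf, ENNReal.mul_iInf_of_ne hpos (ENNReal.add_ne_top.2 ⟨hCt, hCt'⟩)]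
  refine le_iInf fun k => ?_
  refine (iInf_le _ (g + k)).trans ?_
  have e : x + y - (g + k) = (x - g) + (y - k) := by abel
  rw [e]
  calc _ ≤ C * (A₀.N g + A₀.N k) + ENNReal.ofReal t * (C' * (A₁.N (x - g) + A₁.N (y - k))) := by
        gcongr
        · exact h _ _
        · exact h' _ _
    _ ≤ (C + C') * (A₀.N g + A₀.N k) +
          ENNReal.ofReal t * ((C + C') * (A₁.N (x - g) + A₁.N (y - k))) := by
        gcongr
        · exact le_self_add
        · exact le_add_self
    _ = _ := by ring

theorem decomp (A₀ A₁ : QuasiBanach E) : ∃ C : ℝ≥0∞, C ≠ ∞ ∧ ∀ (f : E) (t : ℝ), 0 < t →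
    ∃ g : E, ∀ s, 0 < s →
      Kf A₀.N A₁.N s g ≤ C * Kf A₀.N A₁.N s f ∧
      Kf A₀.N A₁.N s g ≤ C * Kf A₀.N A₁.N t f ∧
      Kf A₀.N A₁.N s (f - g) ≤ C * Kf A₀.N A₁.N s f ∧
      Kf A₀.N A₁.N s (f - g) ≤ C * (ENNReal.ofReal (s / t) * Kf A₀.N A₁.N t f) := by
  obtain ⟨M, hM1, hMt, hadd⟩ := Kf_add A₀ A₁
  have h3 : M * 3 ≠ ∞ := ENNReal.mul_ne_top hMt (by simp)
  have h1C : 1 ≤ M * 3 := hM1.trans (le_mul_of_one_le_right zero_le (by norm_num))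
  have h2C : 2 ≤ M * 3 := by
    calc (2:ℝ≥0∞) ≤ 1 * 3 := by norm_num
      _ ≤ M * 3 := by gcongr
  refine ⟨M * 3, h3, fun f t ht => ?_⟩
  by_cases hdeg : Kf A₀.N A₁.N t f = 0 ∨ Kf A₀.N A₁.N t f = ∞
  · refine ⟨0, fun s hs => ?_⟩
    rw [Kf_zero, sub_zero]
    refine ⟨zero_le, zero_le, le_mul_of_one_le_left zero_le h1C, ?_⟩
    rcases hdeg with h | h
    · rw [h]
      simp only [mul_zero, nonpos_iff_eq_zero]
      rw [← nonpos_iff_eq_zero]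
      rcases le_total s t with hst | hst
      · exact ((Kf_qm A₀.N A₁.N f s t hs hst).1).trans h.le
      · refine ((Kf_qm A₀.N A₁.N f t s ht hst).2).trans ?_
        simp only [h, mul_zero, le_refl]
    · rw [h, ENNReal.mul_top (by simpa using div_pos hs ht), ENNReal.mul_top]
      · exact le_top
      · exact (lt_of_lt_of_le one_pos h1C).ne'
  · push Not at hdeg
    obtain ⟨hK0, hKt⟩ := hdeg
    have hlt : Kf A₀.N A₁.N t f < 2 * Kf A₀.N A₁.N t f := by
      rw [two_mul]
      exact ENNReal.lt_add_right hKt hK0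
    obtain ⟨g, hg⟩ := iInf_lt_iff.1 (show (⨅ g : E, A₀.N g + ENNReal.ofReal t * A₁.N (f - g)) < _
      from hlt)
    refine ⟨g, fun s hs => ?_⟩
    have b1 : Kf A₀.N A₁.N s g ≤ 2 * Kf A₀.N A₁.N t f := by
      refine (iInf_le _ g).trans ?_
      rw [sub_self, A₁.zero, mul_zero, add_zero]
      exact le_self_add.trans hg.le
    have b2 : Kf A₀.N A₁.N s (f - g) ≤ 2 * (ENNReal.ofReal (s / t) * Kf A₀.N A₁.N t f) := by
      refine (iInf_le _ (0:E)).trans ?_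
      rw [A₀.zero, zero_add, sub_zero]
      have e : ENNReal.ofReal s = ENNReal.ofReal (s / t) * ENNReal.ofReal t := by
        rw [← ENNReal.ofReal_mul (div_pos hs ht).le, div_mul_cancel₀ _ ht.ne']
      rw [e, mul_assoc, mul_left_comm 2]
      exact mul_le_mul_right (le_add_self.trans hg.le) _
    have fin : ∀ a b c : ℝ≥0∞, a ≤ M * (c + b) → b ≤ 2 * c → a ≤ M * 3 * c := fun a b c h1 h2 => by
      refine h1.trans ?_
      calc M * (c + b) ≤ M * (c + 2 * c) := by gcongr
        _ = _ := by ring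
    have a1 : Kf A₀.N A₁.N s g ≤ M * (Kf A₀.N A₁.N s f + Kf A₀.N A₁.N s (f - g)) := by
      have := hadd s f (-(f - g))
      rw [Kf_neg] at this
      simpa using this
    have a2 : Kf A₀.N A₁.N s (f - g) ≤ M * (Kf A₀.N A₁.N s f + Kf A₀.N A₁.N s g) := by
      have := hadd s f (-g)
      rwa [Kf_neg, ← sub_eq_add_neg] at this
    have key : Kf A₀.N A₁.N s g ≤ M * 3 * Kf A₀.N A₁.N s f ∧
        Kf A₀.N A₁.N s (f - g) ≤ M * 3 * Kf A₀.N A₁.N s f := by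
      rcases le_total s t with hst | hst
      · have hq := (Kf_qm A₀.N A₁.N f s t hs hst).2
        have hb : Kf A₀.N A₁.N s (f - g) ≤ 2 * Kf A₀.N A₁.N s f := by
          refine b2.trans ?_
          gcongr
          refine (mul_le_mul_right hq _).trans (le_of_eq ?_)
          rw [← mul_assoc, ← ENNReal.ofReal_mul (div_pos hs ht).le]
          have : s / t * (t / s) = 1 := by field_simp
          rw [this]; simp
        exact ⟨fin _ _ _ a1 hb, hb.trans (by gcongr)⟩
      · have hq := (Kf_qm A₀.N A₁.N f t s ht hst).1
        have hb : Kf A₀.N A₁.N s g ≤ 2 * Kf A₀.N A₁.N s f := by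
          refine b1.trans ?_
          gcongr
        exact ⟨hb.trans (by gcongr), fin _ _ _ a2 hb⟩
    exact ⟨key.1, b1.trans (by gcongr), key.2, b2.trans (by gcongr)⟩

end Decomp

section Main

theorem exists_seqs {R ρ : ℝ → ℝ} (hR : SVp R) {δ : ℝ} (hδ : 0 < δ)
    (hρ : ∀ t, ρ t = t ^ δ * R t) :
    ∃ (τ : ℤ → ℝ) (Λ Λ' : ℝ), Adm τ Λ ∧ Adm (fun k => ρ (τ k)) Λ' := by
  obtain ⟨C, hC, h⟩ := pow_decay hR hδ
  set l : ℝ := max 2 ((2 * C) ^ (2 / δ)) with hl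
  have hl2 : 2 ≤ l := le_max_left _ _
  have hl0 : 0 < l := by linarith
  have hlC : 2 * C ≤ l ^ (δ / 2) := by
    have h1 : ((2 * C) ^ (2 / δ)) ^ (δ / 2) = 2 * C := by
      rw [← Real.rpow_mul (by linarith)]
      have : 2 / δ * (δ / 2) = 1 := by field_simp
      rw [this, Real.rpow_one]
    rw [← h1]
    exact Real.rpow_le_rpow (Real.rpow_nonneg (by linarith) _) (le_max_right _ _) (by linarith)
  have hρ0 : ∀ t, 0 < t → 0 < ρ t := fun t ht => by
    rw [hρ]
    exact mul_pos (Real.rpow_pos_of_pos ht _) (hR.1 t ht)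
  have hdbl := (dbl_pow δ).mul hR.dbl
  obtain ⟨M, hM, hMb⟩ := hdbl.2 l (by linarith)
  have hτ0 : ∀ k : ℤ, 0 < l ^ k := fun k => zpow_pos hl0 k
  have hτs : ∀ k : ℤ, l ^ (k + 1) = l * l ^ k := fun k => by
    rw [zpow_add_one₀ hl0.ne', mul_comm]
  refine ⟨fun k => l ^ k, l, M, adm_of hτ0 (fun k => ?_) (fun k => ?_),
    adm_of (fun k => hρ0 _ (hτ0 k)) (fun k => ?_) (fun k => ?_)⟩
  · rw [hτs]
    have := hτ0 k
    gcongr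
  · rw [hτs]
  · have h0 := hτ0 k
    have hle : l ^ k ≤ l ^ (k + 1) := by rw [hτs]; nlinarith
    have h1 := (h (l ^ k) (l ^ (k + 1)) h0 hle).2
    rw [← hρ, ← hρ] at h1
    have e : l ^ (k + 1) / l ^ k = l := by rw [hτs]; field_simp
    rw [e, Real.rpow_neg hl0.le] at h1
    have hp := hρ0 _ (hτ0 (k + 1))
    have hq : 0 < l ^ (δ / 2) := Real.rpow_pos_of_pos hl0 _
    have h2 : C * (l ^ (δ / 2))⁻¹ ≤ 1 / 2 := by
      rw [← div_eq_mul_inv, div_le_iff₀ hq]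
      linarith
    nlinarith
  · have h0 := hτ0 k
    have hle : l ^ k ≤ l ^ (k + 1) := by rw [hτs]; nlinarith
    have h1 := (hMb (l ^ k) (l ^ (k + 1)) h0 hle (hτs k).le).1
    simp only [← hρ] at h1
    exact h1

theorem Dbl.comp {a ρ : ℝ → ℝ} (ha : Dbl a) (hρ : Dbl ρ) : Dbl (fun t => a (ρ t)) := by
  refine ⟨fun t ht => ha.1 _ (hρ.1 t ht), fun Λ hΛ => ?_⟩
  obtain ⟨M, hM, h⟩ := hρ.2 Λ hΛ
  obtain ⟨C, hC, h'⟩ := ha.2 M hM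
  refine ⟨C, hC, fun s t hs hst hts => ?_⟩
  obtain ⟨h1, h2⟩ := h s t hs hst hts
  rcases le_total (ρ s) (ρ t) with hle | hle
  · exact h' _ _ (hρ.1 s hs) hle h1
  · exact (h' _ _ (hρ.1 t (hs.trans_le hst)) hle h2).symm

theorem lp_le {p : ℝ} (hp : 0 < p) {w D : ℝ≥0∞} {y z : ℤ → ℝ≥0∞} (h : ∀ j, w * y j ≤ D * z j) :
    w * (∑' j, y j ^ p) ^ p⁻¹ ≤ D * (∑' j, z j ^ p) ^ p⁻¹ := by
  have e : ∀ (w : ℝ≥0∞) (y : ℤ → ℝ≥0∞),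
      w * (∑' j, y j ^ p) ^ p⁻¹ = (∑' j, (w * y j) ^ p) ^ p⁻¹ := fun w y => by
    simp_rw [ENNReal.mul_rpow_of_nonneg _ _ hp.le]
    rw [ENNReal.tsum_mul_left, ENNReal.mul_rpow_of_nonneg _ _ (inv_pos.2 hp).le,
      ← ENNReal.rpow_mul, mul_inv_cancel₀ hp.ne', ENNReal.rpow_one]
  rw [e, e]
  exact ENNReal.rpow_le_rpow (ENNReal.tsum_le_tsum fun j => ENNReal.rpow_le_rpow (h j) hp.le)
    (inv_pos.2 hp).le

theorem ofReal_pw {t : ℝ} (ht : 0 < t) (θ b : ℝ) :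
    ENNReal.ofReal (t ^ (-θ) * b) * ENNReal.ofReal t = ENNReal.ofReal (t ^ (1 - θ) * b) := by
  rw [← ENNReal.ofReal_mul' ht.le]
  congr 1
  rw [sub_eq_neg_add, Real.rpow_add ht, Real.rpow_one]
  ring

theorem core_low (A₀ A₁ : QuasiBanach E) {L₀ L₁ : E → ℝ≥0∞} {d₀ d₁ : ℤ → ℝ≥0∞} {τ u : ℤ → ℝ}
    (hd : ∀ k, d₀ k = ENNReal.ofReal (u k) * d₁ k)
    (h₀ : ∃ C : ℝ≥0∞, C ≠ ∞ ∧ ∀ f k, d₀ k * Kf A₀.N A₁.N (τ k) f ≤ C * L₀ f)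
    (h₁ : ∃ C : ℝ≥0∞, C ≠ ∞ ∧ ∀ f k, d₁ k * Kf A₀.N A₁.N (τ k) f ≤ C * L₁ f) :
    ∃ C : ℝ≥0∞, C ≠ ∞ ∧ ∀ f k, d₀ k * Kf A₀.N A₁.N (τ k) f ≤ C * Kf L₀ L₁ (u k) f := by
  obtain ⟨C₀, hC₀, h₀⟩ := h₀
  obtain ⟨C₁, hC₁, h₁⟩ := h₁
  obtain ⟨M, hM1, hMt, hadd⟩ := Kf_add A₀ A₁
  have hfin : M * (C₀ + C₁) + 1 ≠ ∞ := by finiteness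
  refine ⟨M * (C₀ + C₁) + 1, hfin, fun f k => ?_⟩
  unfold Kf
  rw [ENNReal.mul_iInf_of_ne (by simp) hfin]
  refine le_iInf fun g => ?_
  have h1 : Kf A₀.N A₁.N (τ k) f ≤ M * (Kf A₀.N A₁.N (τ k) g + Kf A₀.N A₁.N (τ k) (f - g)) := by
    have := hadd (τ k) g (f - g)
    rwa [add_sub_cancel] at this
  calc d₀ k * Kf A₀.N A₁.N (τ k) f
      ≤ d₀ k * (M * (Kf A₀.N A₁.N (τ k) g + Kf A₀.N A₁.N (τ k) (f - g))) := by gcongr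
    _ = M * (d₀ k * Kf A₀.N A₁.N (τ k) g + d₀ k * Kf A₀.N A₁.N (τ k) (f - g)) := by ring
    _ = M * (d₀ k * Kf A₀.N A₁.N (τ k) g +
          ENNReal.ofReal (u k) * (d₁ k * Kf A₀.N A₁.N (τ k) (f - g))) := by
        congr 2
        rw [hd k, mul_assoc]
    _ ≤ M * ((C₀ + C₁) * L₀ g + ENNReal.ofReal (u k) * ((C₀ + C₁) * L₁ (f - g))) := by
        refine mul_le_mul_right (add_le_add ?_ (mul_le_mul_right ?_ _)) _
        · exact (h₀ g k).trans (mul_le_mul_left le_self_add _)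
        · exact (h₁ (f - g) k).trans (mul_le_mul_left le_add_self _)
    _ = M * (C₀ + C₁) * (L₀ g + ENNReal.ofReal (u k) * L₁ (f - g)) := by ring
    _ ≤ _ := mul_le_mul_left le_self_add _

theorem core_up (A₀ A₁ : QuasiBanach E) {L₀ L₁ : E → ℝ≥0∞} {a c₀ c₁ : ℝ → ℝ}
    (ha : SVp a) (hc₀ : SVp c₀) (hc₁ : SVp c₁) {τ u : ℤ → ℝ} {Λ Λ' : ℝ}
    (hτ : Adm τ Λ) (hu : Adm u Λ') {θ₀ θ₁ θ p β : ℝ} (hθ₀ : 0 < θ₀) (hθ₁ : θ₁ < 1) (hθ : 0 < θ)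
    (hθ' : θ < 1) (hp : 0 < p) (hβ : 0 < β) (hb1 : β ≤ θ / 2) (hb2 : β ≤ (1 - θ) / 2)
    (hb3 : β ≤ θ₀ / 2) (hb4 : β ≤ (1 - θ₁) / 2) {w d₀ d₁ : ℤ → ℝ≥0∞}
    (hw : ∀ k, w k = ENNReal.ofReal (u k ^ (-θ) * a (u k)))
    (hd₀ : ∀ k, d₀ k = ENNReal.ofReal (τ k ^ (-θ₀) * c₀ (τ k)))
    (hd₁ : ∀ k, d₁ k = ENNReal.ofReal (τ k ^ (-θ₁) * c₁ (τ k)))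
    (hd : ∀ k, d₀ k = ENNReal.ofReal (u k) * d₁ k)
    (h₀ : ∃ C : ℝ≥0∞, C ≠ ∞ ∧ ∀ f,
      L₀ f ≤ C * (∑' j, (d₀ j * Kf A₀.N A₁.N (τ j) f) ^ p) ^ p⁻¹)
    (h₁ : ∃ C : ℝ≥0∞, C ≠ ∞ ∧ ∀ f,
      L₁ f ≤ C * (∑' j, (d₁ j * Kf A₀.N A₁.N (τ j) f) ^ p) ^ p⁻¹) :
    ∃ C : ℝ≥0∞, C ≠ ∞ ∧ ∀ f k, w k * Kf L₀ L₁ (u k) f ≤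
      C * (∑' j, (geo β (j - k) * (w j * d₀ j * Kf A₀.N A₁.N (τ j) f +
        w k * d₀ k * Kf A₀.N A₁.N (τ k) f)) ^ p) ^ p⁻¹ := by
  obtain ⟨C₀, hC₀, h₀⟩ := h₀
  obtain ⟨C₁, hC₁, h₁⟩ := h₁
  obtain ⟨M, hM, hdec⟩ := decomp A₀ A₁
  obtain ⟨Ca, hCa, ha'⟩ := seq_decay hu ha hθ hβ hb1
  obtain ⟨Cb, hCb, hb'⟩ := seq_decay hτ hc₀ hθ₀ hβ hb3
  obtain ⟨Cc, hCc, hc'⟩ := seq_decay hu ha (sub_pos.2 hθ') hβ hb2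
  obtain ⟨Cd, hCd, hd'⟩ := seq_decay hτ hc₁ (sub_pos.2 hθ₁) hβ hb4
  have hu0 := hu.2.1
  have hτ0 := hτ.2.1
  simp_rw [← ofReal_pw (hu0 _), ← hw] at hc'
  simp_rw [← ofReal_pw (hτ0 _), ← hd₁] at hd'
  simp_rw [← hw] at ha'
  simp_rw [← hd₀] at hb'
  have gs : ∀ j k, geo β (k - j) = geo β (j - k) := fun j k => by
    rw [← geo_neg β (j - k), neg_sub]
  refine ⟨C₀ * ((Ca + Cb) * M) + C₁ * ((Cc + Cd) * M), by finiteness, fun f k => ?_⟩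
  obtain ⟨g, hg⟩ := hdec f (τ k) (hτ0 k)
  set x : ℤ → ℝ≥0∞ := fun j => w j * d₀ j * Kf A₀.N A₁.N (τ j) f with hx
  have k1 : ∀ j, w k * (d₀ j * Kf A₀.N A₁.N (τ j) g) ≤
      ((Ca + Cb) * M) * (geo β (j - k) * (x j + x k)) := fun j => by
    obtain ⟨g1, g2, g3, g4⟩ := hg (τ j) (hτ0 j)
    rcases le_total j k with hjk | hjk
    · calc w k * (d₀ j * Kf A₀.N A₁.N (τ j) g)
          ≤ (Ca * geo β (j - k) * w j) * (d₀ j * (M * Kf A₀.N A₁.N (τ j) f)) := by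
            gcongr
            exact (ha' j k hjk).1
        _ = (Ca * M) * (geo β (j - k) * x j) := by rw [hx]; ring
        _ ≤ _ := by
            gcongr
            · exact le_self_add
            · exact le_self_add
    · calc w k * (d₀ j * Kf A₀.N A₁.N (τ j) g)
          ≤ w k * ((Cb * geo β (k - j) * d₀ k) * (M * Kf A₀.N A₁.N (τ k) f)) := by
            gcongr
            exact (hb' k j hjk).1
        _ = (Cb * M) * (geo β (j - k) * x k) := by rw [hx, gs j k]; ring
        _ ≤ _ := by
            gcongr
            · exact le_add_self
            · exact le_add_self
  have k2 : ∀ j, (w k * ENNReal.ofReal (u k)) * (d₁ j * Kf A₀.N A₁.N (τ j) (f - g)) ≤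
      ((Cc + Cd) * M) * (geo β (j - k) * (x j + x k)) := fun j => by
    obtain ⟨g1, g2, g3, g4⟩ := hg (τ j) (hτ0 j)
    rcases le_total j k with hjk | hjk
    · have e : ENNReal.ofReal (τ j / τ k) =
          ENNReal.ofReal (τ j) * ENNReal.ofReal (τ k)⁻¹ := by
        rw [div_eq_mul_inv, ENNReal.ofReal_mul (hτ0 j).le]
      have e1 : ENNReal.ofReal (τ k) * ENNReal.ofReal (τ k)⁻¹ = 1 := by
        rw [← ENNReal.ofReal_mul (hτ0 k).le, mul_inv_cancel₀ (hτ0 k).ne', ENNReal.ofReal_one]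
      calc (w k * ENNReal.ofReal (u k)) * (d₁ j * Kf A₀.N A₁.N (τ j) (f - g))
          ≤ (w k * ENNReal.ofReal (u k)) *
            (d₁ j * (M * (ENNReal.ofReal (τ j / τ k) * Kf A₀.N A₁.N (τ k) f))) :=
              mul_le_mul_right (mul_le_mul_right g4 _) _
        _ = (w k * ENNReal.ofReal (u k)) * M * (d₁ j * ENNReal.ofReal (τ j)) *
              (ENNReal.ofReal (τ k)⁻¹ * Kf A₀.N A₁.N (τ k) f) := by rw [e]; ring
        _ ≤ (w k * ENNReal.ofReal (u k)) * M *
              (Cd * geo β (j - k) * (d₁ k * ENNReal.ofReal (τ k))) *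
              (ENNReal.ofReal (τ k)⁻¹ * Kf A₀.N A₁.N (τ k) f) :=
              mul_le_mul_left (mul_le_mul_right (hd' j k hjk).2 _) _
        _ = (Cd * M) * (geo β (j - k) * (w k * (ENNReal.ofReal (u k) * d₁ k) *
              Kf A₀.N A₁.N (τ k) f)) *
              (ENNReal.ofReal (τ k) * ENNReal.ofReal (τ k)⁻¹) := by ring
        _ = (Cd * M) * (geo β (j - k) * x k) := by rw [e1, mul_one, ← hd]
        _ ≤ _ := by
            gcongr
            · exact le_add_self
            · exact le_add_self
    · calc (w k * ENNReal.ofReal (u k)) * (d₁ j * Kf A₀.N A₁.N (τ j) (f - g))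
          ≤ (Cc * geo β (k - j) * (w j * ENNReal.ofReal (u j))) *
            (d₁ j * (M * Kf A₀.N A₁.N (τ j) f)) :=
              mul_le_mul' (hc' k j hjk).2 (mul_le_mul_right g3 _)
        _ = (Cc * M) * (geo β (j - k) * (w j * (ENNReal.ofReal (u j) * d₁ j) *
              Kf A₀.N A₁.N (τ j) f)) := by rw [gs j k]; ring
        _ = (Cc * M) * (geo β (j - k) * x j) := by rw [← hd]
        _ ≤ _ := by
            gcongr
            · exact le_self_add
            · exact le_self_add
  have l1 := lp_le hp k1
  have l2 := lp_le hp k2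
  set Z := (∑' j, (geo β (j - k) * (x j + x k)) ^ p) ^ p⁻¹ with hZ
  calc w k * Kf L₀ L₁ (u k) f ≤ w k * (L₀ g + ENNReal.ofReal (u k) * L₁ (f - g)) :=
        mul_le_mul_right (iInf_le _ g) _
    _ ≤ w k * (C₀ * (∑' j, (d₀ j * Kf A₀.N A₁.N (τ j) g) ^ p) ^ p⁻¹ + ENNReal.ofReal (u k) *
          (C₁ * (∑' j, (d₁ j * Kf A₀.N A₁.N (τ j) (f - g)) ^ p) ^ p⁻¹)) :=
        mul_le_mul_right (add_le_add (h₀ g) (mul_le_mul_right (h₁ (f - g)) _)) _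
    _ = C₀ * (w k * (∑' j, (d₀ j * Kf A₀.N A₁.N (τ j) g) ^ p) ^ p⁻¹) +
          C₁ * ((w k * ENNReal.ofReal (u k)) *
            (∑' j, (d₁ j * Kf A₀.N A₁.N (τ j) (f - g)) ^ p) ^ p⁻¹) := by ring
    _ ≤ C₀ * ((Ca + Cb) * M * Z) + C₁ * ((Cc + Cd) * M * Z) :=
        add_le_add (mul_le_mul_right l1 _) (mul_le_mul_right l2 _)
    _ = _ := by ring

theorem exists_p {s : List ℝ≥0∞} (h : ∀ r ∈ s, 0 < r) :
    ∃ p : ℝ, 0 < p ∧ ∀ r ∈ s, ENNReal.ofReal p ≤ r := by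
  induction s with
  | nil => exact ⟨1, one_pos, by simp⟩
  | cons r s ih =>
    obtain ⟨p, hp, hs⟩ := ih fun r hr => h r (List.mem_cons_of_mem _ hr)
    have hr := h r List.mem_cons_self
    have hm : min (ENNReal.ofReal p) r ≠ ∞ :=
      ne_top_of_le_ne_top ENNReal.ofReal_ne_top (min_le_left _ _)
    have hm0 : 0 < min (ENNReal.ofReal p) r := lt_min (by simpa using hp) hr
    refine ⟨(min (ENNReal.ofReal p) r).toReal, ENNReal.toReal_pos hm0.ne' hm, fun q hq => ?_⟩
    rw [ENNReal.ofReal_toReal hm]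
    rcases List.mem_cons.1 hq with rfl | hq
    · exact min_le_right _ _
    · exact (min_le_left _ _).trans (hs q hq)

theorem wt_eq {r : ℝ≥0∞} (hr : 0 < r) {a w c : ℝ → ℝ} (ha : SVp a) (hw : SVp w)
    (hfin : tailB r w 1 ≠ ∞) (hc : ∀ t, c t = a t * (tailB r w t).toReal) (σ : ℝ) {t : ℝ}
    (ht : 0 < t) :
    ENNReal.ofReal (t ^ (-σ) * a t) * tailB r w t = ENNReal.ofReal (t ^ (-σ) * c t) := by
  have h0 : 0 ≤ t ^ (-σ) * a t := mul_nonneg (Real.rpow_nonneg ht.le _) (ha.1 t ht).le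
  conv_lhs => rw [← ENNReal.ofReal_toReal (tailB_ne_top hr hw hfin ht)]
  rw [← ENNReal.ofReal_mul h0, hc, mul_assoc]

end Main

theorem theorem25
    (A₀ A₁ : QuasiBanach E)
    (hne : ∃ x : E, x ≠ 0 ∧ A₀.N x ≠ ∞ ∧ A₁.N x ≠ ∞)
    (θ₀ θ₁ θ : ℝ) (hθ₀ : 0 < θ₀) (hθ₀₁ : θ₀ < θ₁) (hθ₁ : θ₁ < 1) (hθ : 0 < θ) (hθ' : θ < 1)
    (r r₀ r₁ q₀ q₁ : ℝ≥0∞) (hr : 0 < r) (hr₀ : 0 < r₀) (hr₁ : 0 < r₁) (hq₀ : 0 < q₀) (hq₁ : 0 < q₁)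
    (a a₀ a₁ b₀ b₁ : ℝ → ℝ)
    (h_sv_a : SlowlyVarying a)
    (h_sv_a₀ : SlowlyVarying a₀)
    (h_sv_a₁ : SlowlyVarying a₁)
    (h_sv_b₀ : SlowlyVarying b₀)
    (h_sv_b₁ : SlowlyVarying b₁)
    (hfin₀ : LqNorm r₀ (Ioi 1) (svWgt r₀ (fun s => b₀ s / a₀ s)) ≠ ∞)
    (hfin₁ : LqNorm r₁ (Ioi 1) (svWgt r₁ (fun s => b₁ s / a₁ s)) ≠ ∞)
    (c₀ c₁ ρ : ℝ → ℝ)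
    (hc₀ : ∀ t, c₀ t = a₀ t * (LqNorm r₀ (Ioi t) (svWgt r₀ (fun s => b₀ s / a₀ s))).toReal)
    (hc₁ : ∀ t, c₁ t = a₁ t * (LqNorm r₁ (Ioi t) (svWgt r₁ (fun s => b₁ s / a₁ s))).toReal)
    (hρ : ∀ t, ρ t = t ^ (θ₁ - θ₀) * (c₀ t / c₁ t)) :
    EquivNorms
      (normK (normL A₀.N A₁.N θ₀ r₀ q₀ b₀ a₀) (normL A₀.N A₁.N θ₁ r₁ q₁ b₁ a₁) θ r a)
      (normK A₀.N A₁.N ((1 - θ) * θ₀ + θ * θ₁) r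
        (fun t => c₀ t ^ (1 - θ) * c₁ t ^ θ * a (ρ t))) := by
  have ha := h_sv_a.svp
  have ha₀ := h_sv_a₀.svp
  have ha₁ := h_sv_a₁.svp
  have hw₀ : SVp (fun s => b₀ s / a₀ s) := h_sv_b₀.svp.div ha₀
  have hw₁ : SVp (fun s => b₁ s / a₁ s) := h_sv_b₁.svp.div ha₁
  have hsc₀ : SVp c₀ := by
    have : c₀ = fun t => a₀ t * (tailB r₀ (fun s => b₀ s / a₀ s) t).toReal := funext hc₀
    rw [this]
    exact ha₀.mul (svp_tailB hr₀ hw₀ hfin₀)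
  have hsc₁ : SVp c₁ := by
    have : c₁ = fun t => a₁ t * (tailB r₁ (fun s => b₁ s / a₁ s) t).toReal := funext hc₁
    rw [this]
    exact ha₁.mul (svp_tailB hr₁ hw₁ hfin₁)
  have hR := hsc₀.div hsc₁
  obtain ⟨τ, Λ, Λ', hτ, hu⟩ := exists_seqs hR (sub_pos.2 hθ₀₁) hρ
  have hρd : Dbl ρ := by
    have : ρ = fun t => t ^ (θ₁ - θ₀) * (c₀ t / c₁ t) := funext hρ
    rw [this]
    exact (dbl_pow _).mul hR.dbl
  have hsharp : Dbl (fun t => c₀ t ^ (1 - θ) * c₁ t ^ θ * a (ρ t)) :=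
    ((hsc₀.dbl.rpow (sub_pos.2 hθ').le).mul (hsc₁.dbl.rpow hθ.le)).mul (ha.dbl.comp hρd)
  have hτ0 := hτ.2.1
  set u : ℤ → ℝ := fun k => ρ (τ k) with hud
  have hu0 : ∀ k, 0 < u k := hu.2.1
  obtain ⟨p, hp, hps⟩ := exists_p (s := [r, r₀, r₁, q₀, q₁]) (by
    simp [hr, hr₀, hr₁, hq₀, hq₁])
  simp only [List.mem_cons, List.not_mem_nil, or_false, forall_eq_or_imp, forall_eq] at hps
  obtain ⟨pr, pr₀, pr₁, pq₀, pq₁⟩ := hps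
  set L₀ := normL A₀.N A₁.N θ₀ r₀ q₀ b₀ a₀ with hL₀
  set L₁ := normL A₀.N A₁.N θ₁ r₁ q₁ b₁ a₁ with hL₁
  set w : ℤ → ℝ≥0∞ := fun k => ENNReal.ofReal (u k ^ (-θ) * a (u k)) with hw
  set d₀ : ℤ → ℝ≥0∞ := fun k => ENNReal.ofReal (τ k ^ (-θ₀) * c₀ (τ k)) with hd₀
  set d₁ : ℤ → ℝ≥0∞ := fun k => ENNReal.ofReal (τ k ^ (-θ₁) * c₁ (τ k)) with hd₁
  have hd : ∀ k, d₀ k = ENNReal.ofReal (u k) * d₁ k := fun k => by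
    rw [hd₀, hd₁]
    simp only
    rw [← ENNReal.ofReal_mul (hu0 k).le]
    congr 1
    rw [hud]
    simp only
    rw [hρ]
    have h1 := (hsc₁.1 _ (hτ0 k)).ne'
    have e : τ k ^ (-θ₀) = τ k ^ (θ₁ - θ₀) * τ k ^ (-θ₁) := by
      rw [← Real.rpow_add (hτ0 k)]; congr 1; ring
    rw [e]
    field_simp
  have hx : ∀ k, ENNReal.ofReal (τ k ^ (-((1 - θ) * θ₀ + θ * θ₁)) *
      (c₀ (τ k) ^ (1 - θ) * c₁ (τ k) ^ θ * a (ρ (τ k)))) = w k * d₀ k := fun k => by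
    have t0 := hτ0 k
    have p0 := hsc₀.1 _ t0
    have p1 := hsc₁.1 _ t0
    rw [hw, hd₀]
    simp only
    rw [← ENNReal.ofReal_mul (mul_nonneg (Real.rpow_nonneg (hu0 k).le _) (ha.1 _ (hu0 k)).le)]
    congr 1
    have e1 : u k ^ (-θ) = τ k ^ (-(θ * (θ₁ - θ₀))) * (c₀ (τ k) ^ (-θ) * c₁ (τ k) ^ θ) := by
      rw [hud]
      simp only
      rw [hρ, Real.mul_rpow (Real.rpow_nonneg t0.le _) (div_pos p0 p1).le,
        Real.div_rpow p0.le p1.le, ← Real.rpow_mul t0.le, Real.rpow_neg p1.le, div_inv_eq_mul]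
      congr 2
      ring
    have e2 : c₀ (τ k) ^ (1 - θ) = c₀ (τ k) ^ (-θ) * c₀ (τ k) := by
      rw [sub_eq_neg_add, Real.rpow_add p0, Real.rpow_one]
    have e3 : τ k ^ (-((1 - θ) * θ₀ + θ * θ₁)) = τ k ^ (-(θ * (θ₁ - θ₀))) * τ k ^ (-θ₀) := by
      rw [← Real.rpow_add t0]; congr 1; ring
    rw [e1, e2, e3]
    ring
  have aem₀ := svWgt_aem (r := r₀) h_sv_b₀.1 h_sv_a₀.1
  have aem₁ := svWgt_aem (r := r₁) h_sv_b₁.1 h_sv_a₁.1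
  have weq₀ := fun k => wt_eq hr₀ ha₀ hw₀ hfin₀ hc₀ θ₀ (hτ0 k)
  have weq₁ := fun k => wt_eq hr₁ ha₁ hw₁ hfin₁ hc₁ θ₁ (hτ0 k)
  have low₀ : ∃ C : ℝ≥0∞, C ≠ ∞ ∧ ∀ f k, d₀ k * Kf A₀.N A₁.N (τ k) f ≤ C * L₀ f := by
    obtain ⟨C, hC, h⟩ := PhiL_low θ₀ hr₀ hq₀ ha₀ aem₀
    refine ⟨C, hC, fun f k => ?_⟩
    have := h _ (Kf_qm A₀.N A₁.N f) (τ k) (hτ0 k)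
    rwa [weq₀ k] at this
  have low₁ : ∃ C : ℝ≥0∞, C ≠ ∞ ∧ ∀ f k, d₁ k * Kf A₀.N A₁.N (τ k) f ≤ C * L₁ f := by
    obtain ⟨C, hC, h⟩ := PhiL_low θ₁ hr₁ hq₁ ha₁ aem₁
    refine ⟨C, hC, fun f k => ?_⟩
    have := h _ (Kf_qm A₀.N A₁.N f) (τ k) (hτ0 k)
    rwa [weq₁ k] at this
  have up₀ : ∃ C : ℝ≥0∞, C ≠ ∞ ∧ ∀ f,
      L₀ f ≤ C * (∑' j, (d₀ j * Kf A₀.N A₁.N (τ j) f) ^ p) ^ p⁻¹ := by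
    obtain ⟨C, hC, h⟩ := PhiL_up hτ θ₀ hr₀ hq₀ ha₀ aem₀ hp pq₀ pr₀
    refine ⟨C, hC, fun f => ?_⟩
    have := h _ (Kf_qm A₀.N A₁.N f)
    simp_rw [weq₀] at this
    exact this
  have up₁ : ∃ C : ℝ≥0∞, C ≠ ∞ ∧ ∀ f,
      L₁ f ≤ C * (∑' j, (d₁ j * Kf A₀.N A₁.N (τ j) f) ^ p) ^ p⁻¹ := by
    obtain ⟨C, hC, h⟩ := PhiL_up hτ θ₁ hr₁ hq₁ ha₁ aem₁ hp pq₁ pr₁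
    refine ⟨C, hC, fun f => ?_⟩
    have := h _ (Kf_qm A₀.N A₁.N f)
    simp_rw [weq₁] at this
    exact this
  obtain ⟨β, hβ, hb1, hb2, hb3, hb4⟩ : ∃ β : ℝ, 0 < β ∧ β ≤ θ / 2 ∧ β ≤ (1 - θ) / 2 ∧
      β ≤ θ₀ / 2 ∧ β ≤ (1 - θ₁) / 2 := by
    refine ⟨min (min (θ / 2) ((1 - θ) / 2)) (min (θ₀ / 2) ((1 - θ₁) / 2)), ?_, ?_, ?_, ?_, ?_⟩
    · refine lt_min (lt_min ?_ ?_) (lt_min ?_ ?_) <;> linarith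
    · exact (min_le_left _ _).trans (min_le_left _ _)
    · exact (min_le_left _ _).trans (min_le_right _ _)
    · exact (min_le_right _ _).trans (min_le_left _ _)
    · exact (min_le_right _ _).trans (min_le_right _ _)
  obtain ⟨Cl, hCl, hl⟩ := core_low A₀ A₁ hd low₀ low₁
  obtain ⟨Cu, hCu, hup⟩ := core_up A₀ A₁ ha hsc₀ hsc₁ hτ hu hθ₀ hθ₁ hθ hθ' hp hβ hb1 hb2 hb3 hb4
    (fun _ => rfl) (fun _ => rfl) (fun _ => rfl) hd up₀ up₁
  obtain ⟨Ch, hCh, hh⟩ := hardy hr hp hβ pr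
  obtain ⟨C₁, hC₁, hn₁⟩ := normK_discr hu θ hr ha.dbl
  obtain ⟨C₂, hC₂, hn₂⟩ := normK_discr hτ ((1 - θ) * θ₀ + θ * θ₁) hr hsharp
  set nX := normK L₀ L₁ θ r a with hnX
  set nY := normK A₀.N A₁.N ((1 - θ) * θ₀ + θ * θ₁) r
        (fun t => c₀ t ^ (1 - θ) * c₁ t ^ θ * a (ρ t)) with hnY
  have X : ∀ f, nX f ≤ C₁ * ell r (fun k => w k * Kf L₀ L₁ (u k) f) ∧
      ell r (fun k => w k * Kf L₀ L₁ (u k) f) ≤ C₁ * nX f := fun f => hn₁ _ (Kf_qm L₀ L₁ f)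
  have Y : ∀ f, nY f ≤ C₂ * ell r (fun k => w k * d₀ k * Kf A₀.N A₁.N (τ k) f) ∧
      ell r (fun k => w k * d₀ k * Kf A₀.N A₁.N (τ k) f) ≤ C₂ * nY f := fun f => by
    have := hn₂ _ (Kf_qm A₀.N A₁.N f)
    simp_rw [hx] at this
    exact this
  have hXY : ∀ f, nX f ≤ C₁ * (Cu * (Ch * (C₂ * nY f))) := fun f => by
    refine (X f).1.trans (mul_le_mul_right ?_ _)
    refine (ell_le_mul hr hCu (hup f)).trans (mul_le_mul_right ?_ _)
    exact (hh _).trans (mul_le_mul_right (Y f).2 _)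
  have hYX : ∀ f, nY f ≤ C₂ * (Cl * (C₁ * nX f)) := fun f => by
    refine (Y f).1.trans (mul_le_mul_right ?_ _)
    refine (ell_le_mul hr hCl (y := fun k => w k * Kf L₀ L₁ (u k) f) fun k => ?_).trans
      (mul_le_mul_right (X f).2 _)
    rw [mul_assoc, mul_left_comm Cl]
    exact mul_le_mul_right (hl f k) _
  have hfin : C₁ * Cu * Ch * C₂ + C₂ * Cl * C₁ + 1 ≠ ∞ := by finiteness
  refine ⟨C₁ * Cu * Ch * C₂ + C₂ * Cl * C₁ + 1, by simp, hfin, fun f => ⟨?_, ?_⟩⟩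
  · rw [mul_comm, ← div_eq_mul_inv]
    apply ENNReal.div_le_of_le_mul
    rw [mul_comm]
    refine (hYX f).trans ?_
    calc _ = (C₂ * Cl * C₁) * nX f := by ring
      _ ≤ _ := mul_le_mul_left (le_add_self.trans le_self_add) _
  · refine (hXY f).trans ?_
    calc _ = (C₁ * Cu * Ch * C₂) * nY f := by ring
      _ ≤ _ := mul_le_mul_left (le_self_add.trans le_self_add) _

end
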